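/- Let m ≥ 1, n ≥ 1, D ≥ 1 be integers. For every positive integer N there exists a constant γ depending only on m, n, D, N such that the following holds. Let S ⊆ ℝ^n be a finite set with |S| ≤ N and diameter at most 1, and for each x ∈ S let G(x) ⊆ 𝒫⃗ be convex. Suppose that for every subset S′ ⊆ S with |S′| ≤ 2^(D·binom(n+m−1, n)) there exists F^{S′} ∈ Ċ^m(ℝ^n,ℝ^D) with ‖F^{S′}‖_{Ċ^m(ℝ^n,ℝ^D)} ≤ 1 and J_x F^{S′} ∈ G(x) for all x ∈ S′. Then there exists F ∈ Ċ^m(ℝ^n,ℝ^D) with ‖F‖_{Ċ^m(ℝ^n,ℝ^D)} ≤ γ and J_x F ∈ G(x) for all x ∈ S. -/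

import Mathlib

open scoped BigOperators Classical

noncomputable section

/-- `En n` is Euclidean space `ℝ^n`. -/
abbrev En (n : ℕ) : Type := EuclideanSpace ℝ (Fin n)

/-- First-order partial derivative `∂_i f` in the `i`-th coordinate direction. -/
noncomputable def pd1 {n : ℕ} (i : Fin n) (f : En n → ℝ) : En n → ℝ :=
  fun x => fderiv ℝ f x (EuclideanSpace.single i 1)

/-- Higher-order partial derivative `∂^α f` for a multi-index `α`. -/
noncomputable def pdalpha {n : ℕ} (α : Fin n → ℕ) (f : En n → ℝ) : En n → ℝ :=
  (List.finRange n).foldr (fun i g => (pd1 i)^[α i] g) f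

/-- First-order partial derivative within a set `s`. -/
noncomputable def pd1W {n : ℕ} (s : Set (En n)) (i : Fin n) (f : En n → ℝ) : En n → ℝ :=
  fun x => fderivWithin ℝ f s x (EuclideanSpace.single i 1)

/-- Higher-order partial derivative `∂^α f` within a set `s`. -/
noncomputable def pdalphaW {n : ℕ} (s : Set (En n)) (α : Fin n → ℕ) (f : En n → ℝ) : En n → ℝ :=
  (List.finRange n).foldr (fun i g => (pd1W s i)^[α i] g) f

/-- `∂^α` of a multivariate polynomial (formal derivative). -/
noncomputable def polyPD {n : ℕ} (α : Fin n → ℕ) (p : MvPolynomial (Fin n) ℝ) :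
    MvPolynomial (Fin n) ℝ :=
  (List.finRange n).foldr (fun i q => (fun r => MvPolynomial.pderiv i r)^[α i] q) p

/-- The value `∂^α p (x)` of the `α`-th derivative of a polynomial at `x`. -/
noncomputable def polyPDval {n : ℕ} (α : Fin n → ℕ) (p : MvPolynomial (Fin n) ℝ) (x : En n) : ℝ :=
  MvPolynomial.eval (fun i => x i) (polyPD α p)

/-- The `(m-1)`-jet (Taylor polynomial of degree `≤ m-1`) of `f` at `x`. -/
noncomputable def jetScalar (m : ℕ) {n : ℕ} (f : En n → ℝ) (x : En n) :
    MvPolynomial (Fin n) ℝ :=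
  ∑ α ∈ (Finset.univ : Finset (Fin n → Fin m)).filter (fun α => (∑ i, (α i : ℕ)) ≤ m - 1),
    MvPolynomial.C (pdalpha (fun i => (α i : ℕ)) f x / ((∏ i, Nat.factorial (α i : ℕ) : ℕ) : ℝ))
      * ∏ i, (MvPolynomial.X i - MvPolynomial.C (x i)) ^ ((α i : ℕ))

/-- The `(m-1)`-jet of `f` at `x`, with derivatives taken within a set `s`. -/
noncomputable def jetScalarW (m : ℕ) {n : ℕ} (s : Set (En n)) (f : En n → ℝ) (x : En n) :
    MvPolynomial (Fin n) ℝ :=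
  ∑ α ∈ (Finset.univ : Finset (Fin n → Fin m)).filter (fun α => (∑ i, (α i : ℕ)) ≤ m - 1),
    MvPolynomial.C (pdalphaW s (fun i => (α i : ℕ)) f x / ((∏ i, Nat.factorial (α i : ℕ) : ℕ) : ℝ))
      * ∏ i, (MvPolynomial.X i - MvPolynomial.C (x i)) ^ ((α i : ℕ))

/-- The vector-valued `(m-1)`-jet `J_x F ∈ 𝒫⃗` of `F : ℝ^n → ℝ^D` at `x`. -/
noncomputable def jetD (m : ℕ) {n D : ℕ} (F : En n → Fin D → ℝ) (x : En n) :
    Fin D → MvPolynomial (Fin n) ℝ :=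
  fun j => jetScalar m (fun y => F y j) x

/-- The vector-valued `(m-1)`-jet of `F` at `x`, derivatives within `s`. -/
noncomputable def jetDW (m : ℕ) {n D : ℕ} (s : Set (En n)) (F : En n → Fin D → ℝ) (x : En n) :
    Fin D → MvPolynomial (Fin n) ℝ :=
  fun j => jetScalarW m s (fun y => F y j) x

/-- Truncation of a polynomial to total degree `≤ k`. -/
noncomputable def truncDeg {n : ℕ} (k : ℕ) (p : MvPolynomial (Fin n) ℝ) :
    MvPolynomial (Fin n) ℝ :=
  ∑ s ∈ p.support.filter (fun s => (s.sum fun _ e => e) ≤ k),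
    MvPolynomial.monomial s (MvPolynomial.coeff s p)

/-- The degree-`k` Taylor truncation of a polynomial at `x` (the jet `J_x p` of order `k`). -/
noncomputable def taylorTrunc {n : ℕ} (k : ℕ) (x : En n) (p : MvPolynomial (Fin n) ℝ) :
    MvPolynomial (Fin n) ℝ :=
  MvPolynomial.bind₁ (fun i => MvPolynomial.X i - MvPolynomial.C (x i))
    (truncDeg k (MvPolynomial.bind₁ (fun i => MvPolynomial.X i + MvPolynomial.C (x i)) p))

/-- The ring multiplication `p ⊙_x q := J_x(pq)` on degree-`k` jets at `x`. -/
noncomputable def odot {n : ℕ} (k : ℕ) (x : En n) (p q : MvPolynomial (Fin n) ℝ) :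
    MvPolynomial (Fin n) ℝ :=
  taylorTrunc k x (p * q)

/-- `(Γ x M)_{x ∈ E, M > 0}` is a shape field with jets of degree `≤ k` and `d` components:
each `Γ x M` is a convex set of `d`-tuples of polynomials of degree `≤ k`, monotone in `M`. -/
def IsShapeField {N : ℕ} (k d : ℕ) (E : Finset (En N))
    (Γ : En N → ℝ → Set (Fin d → MvPolynomial (Fin N) ℝ)) : Prop :=
  (∀ x ∈ E, ∀ M : ℝ, 0 < M → Convex ℝ (Γ x M)) ∧
  (∀ x ∈ E, ∀ M : ℝ, 0 < M → ∀ P ∈ Γ x M, ∀ j, (P j).totalDegree ≤ k) ∧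
  (∀ x ∈ E, ∀ M' M : ℝ, 0 < M' → M' ≤ M → Γ x M' ⊆ Γ x M)

/-- `(C_w, δmax)`-convexity of a shape field with jets of degree `≤ k`. -/
def SFConvex {N : ℕ} (k d : ℕ) (E : Finset (En N))
    (Γ : En N → ℝ → Set (Fin d → MvPolynomial (Fin N) ℝ)) (Cw δmax : ℝ) : Prop :=
  ∀ δ : ℝ, 0 < δ → δ ≤ δmax → ∀ x ∈ E, ∀ M : ℝ, 0 < M →
    ∀ P₁ P₂ : Fin d → MvPolynomial (Fin N) ℝ, P₁ ∈ Γ x M → P₂ ∈ Γ x M →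
    ∀ Q₁ Q₂ : MvPolynomial (Fin N) ℝ, Q₁.totalDegree ≤ k → Q₂.totalDegree ≤ k →
    (∀ α : Fin N → ℕ, (∑ i, α i) ≤ k → ∀ j,
      |polyPDval α (P₁ j - P₂ j) x| ≤ M * δ ^ (k + 1 - ∑ i, α i)) →
    (∀ α : Fin N → ℕ, (∑ i, α i) ≤ k →
      |polyPDval α Q₁ x| ≤ δ ^ (-((∑ i, α i : ℕ) : ℤ)) ∧
      |polyPDval α Q₂ x| ≤ δ ^ (-((∑ i, α i : ℕ) : ℤ))) →
    odot k x Q₁ Q₁ + odot k x Q₂ Q₂ = 1 →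
    (fun j => odot k x (odot k x Q₁ Q₁) (P₁ j) + odot k x (odot k x Q₂ Q₂) (P₂ j))
      ∈ Γ x (Cw * M)

/-- `‖(P^x)_{x ∈ S}‖_{Ẇ^m(S)} ≤ M` : the homogeneous Whitney seminorm bound. -/
def WSemiLE (m : ℕ) {N d : ℕ} (S : Finset (En N))
    (P : En N → Fin d → MvPolynomial (Fin N) ℝ) (M : ℝ) : Prop :=
  ∀ x ∈ S, ∀ y ∈ S, x ≠ y → ∀ α : Fin N → ℕ, (∑ i, α i) ≤ m - 1 → ∀ j,
    |polyPDval α (P x j - P y j) x| ≤ M * dist x y ^ (m - ∑ i, α i)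

/-- The homogeneous Whitney seminorm `‖(P^x)_{x ∈ S}‖_{Ẇ^m(S)}`. -/
noncomputable def WNormHomog (m : ℕ) {N d : ℕ} (S : Finset (En N))
    (P : En N → Fin d → MvPolynomial (Fin N) ℝ) : ℝ :=
  sSup {r : ℝ | ∃ x ∈ S, ∃ y ∈ S, x ≠ y ∧ ∃ α : Fin N → ℕ, (∑ i, α i) ≤ m - 1 ∧ ∃ j : Fin d,
    r = |polyPDval α (P x j - P y j) x| / dist x y ^ (m - ∑ i, α i)}

/-- The lower-order part of the Whitney norm. -/
noncomputable def WNormLow (m : ℕ) {N d : ℕ} (S : Finset (En N))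
    (P : En N → Fin d → MvPolynomial (Fin N) ℝ) : ℝ :=
  sSup {r : ℝ | ∃ x ∈ S, ∃ α : Fin N → ℕ, (∑ i, α i) ≤ m - 1 ∧ ∃ j : Fin d,
    r = |polyPDval α (P x j) x|}

/-- The Whitney norm `‖(P^x)_{x ∈ S}‖_{W^m(S)}`. -/
noncomputable def WNormFull (m : ℕ) {N d : ℕ} (S : Finset (En N))
    (P : En N → Fin d → MvPolynomial (Fin N) ℝ) : ℝ :=
  WNormLow m S P + WNormHomog m S P

/-- `‖F‖_{C^m} ≤ M`: all partials of order `≤ m` of all components bounded by `M`. -/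
def CmLE (m : ℕ) {n D : ℕ} (F : En n → Fin D → ℝ) (M : ℝ) : Prop :=
  ∀ α : Fin n → ℕ, (∑ i, α i) ≤ m → ∀ x : En n, ∀ j, |pdalpha α (fun y => F y j) x| ≤ M

/-- `‖F‖_{Ċ^m} ≤ M`: all partials of order `= m` of all components bounded by `M`. -/
def CmHomogLE (m : ℕ) {n D : ℕ} (F : En n → Fin D → ℝ) (M : ℝ) : Prop :=
  ∀ α : Fin n → ℕ, (∑ i, α i) = m → ∀ x : En n, ∀ j, |pdalpha α (fun y => F y j) x| ≤ M

/-- `‖F‖_{C^{m-1,1}} ≤ M`. -/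
def Cm11LE (m : ℕ) {n D : ℕ} (F : En n → Fin D → ℝ) (M : ℝ) : Prop :=
  (∀ α : Fin n → ℕ, (∑ i, α i) ≤ m - 1 → ∀ x : En n, ∀ j,
    |pdalpha α (fun y => F y j) x| ≤ M) ∧
  (∀ α : Fin n → ℕ, (∑ i, α i) = m - 1 → ∀ j, ∀ x y : En n,
    |pdalpha α (fun z => F z j) x - pdalpha α (fun z => F z j) y| ≤ M * dist x y)

/-- A closed cube in `ℝ^n` with lower corner `a` and side length `δ`. -/
def cube {n : ℕ} (a : En n) (δ : ℝ) : Set (En n) := {y | ∀ i, a i ≤ y i ∧ y i ≤ a i + δ}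

/-- The embedding `ℝ^n → ℝ^{n+D}`, `x ↦ (x, 0)`. -/
noncomputable def embed (n D : ℕ) (x : En n) : En (n + D) :=
  (EuclideanSpace.equiv (Fin (n + D)) ℝ).symm
    (Fin.append (fun i : Fin n => x i) (fun _ : Fin D => (0 : ℝ)))

/-- The projection `ℝ^{n+D} → ℝ^n`, `(x, ξ) ↦ x`. -/
noncomputable def projn (n D : ℕ) (z : En (n + D)) : En n :=
  (EuclideanSpace.equiv (Fin n) ℝ).symm (fun i => z (Fin.castAdd D i))

/-- Restriction of a polynomial on `ℝ^{n+D}` to `ℝ^n × {0}`, as a polynomial on `ℝ^n`. -/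
noncomputable def restrict0 (n D : ℕ) (p : MvPolynomial (Fin (n + D)) ℝ) :
    MvPolynomial (Fin n) ℝ :=
  MvPolynomial.aeval
    (Fin.append (fun i : Fin n => (MvPolynomial.X i : MvPolynomial (Fin n) ℝ))
      (fun _ : Fin D => 0)) p

/-!
Arrange the points in a binary tree of clusters such that, at each split, the two clusters are
separated by a gap comparable to the diameter of their union. By Taylor's formula the jets of a
function with bounded derivatives of order `m` differ across each split by a bounded amount,
measured in coordinates on `𝒫^D` adapted to the scale of the split; conversely, jets with this
property are interpolated by gluing along the tree with cutoff functions. It remains to select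
compatible jets in convex sets when this is possible, with constant `1`, over any `2 ^ dim 𝒫^D`
of the points.

By Hahn–Banach, a failed selection yields a stress, that is, a family of linear forms on the
fibres, with total zero and bounded transmission across every split. If such a stress is a sum of
nonnegative multiples supported on at most `2 ^ dim 𝒫^D` points and balanced up to a uniform
constant, pairing these with the given partial selections is a contradiction. The uniform
constant comes from compactness: over the hyperreals it suffices that the multiples are balanced
up to bounded hyperreals, which form a valuation ring. There the multipliers preserving balance
form a module whose residue space has dimension at least `2` as soon as the support has more than
`2 ^ dim 𝒫^D` points: along the tree, any dimension which balance costs the residue space is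
gained by a subspace of the dual of `𝒫^D`. A multiplier that is not constant modulo the maximal
ideal splits the stress into two of smaller support.
-/

namespace WeakFiniteness

/-- A hierarchical clustering of points labelled by `ι`: a leaf is a single point, and
`node l r` merges the clusters `l` and `r`. -/
inductive ClusterTree (ι : Type*)
  | leaf (i : ι)
  | node (l r : ClusterTree ι)

namespace ClusterTree

variable {ι : Type*}

/-- The distinguished point of a cluster: its leftmost leaf. -/
def base : ClusterTree ι → ι
  | leaf i => i
  | node l _ => l.base

/-- The points of a cluster. -/
def leaves : ClusterTree ι → Finset ι
  | leaf i => {i}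
  | node l r => l.leaves ∪ r.leaves

/-- The internal nodes of a clustering, each recorded as the pair of clusters it merges. -/
def splits : ClusterTree ι → List (ClusterTree ι × ClusterTree ι)
  | leaf _ => []
  | node l r => (l, r) :: (l.splits ++ r.splits)

/-- The proper descendants of an internal node. -/
def subsplits (ν : ClusterTree ι × ClusterTree ι) : List (ClusterTree ι × ClusterTree ι) :=
  ν.1.splits ++ ν.2.splits

/-- Distinct leaves carry distinct labels. -/
def Nodup (τ : ClusterTree ι) : Prop :=
  ∀ ν ∈ τ.splits, Disjoint ν.1.leaves ν.2.leaves

variable {l r τ : ClusterTree ι} {ν κ : ClusterTree ι × ClusterTree ι}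

lemma base_mem_leaves : ∀ τ : ClusterTree ι, τ.base ∈ τ.leaves
  | leaf i => Finset.mem_singleton_self i
  | node l _ => Finset.mem_union_left _ l.base_mem_leaves

lemma forall_mem_splits_node {p : ClusterTree ι × ClusterTree ι → Prop} :
    (∀ ν ∈ (node l r).splits, p ν) ↔ p (l, r) ∧ (∀ ν ∈ l.splits, p ν) ∧ ∀ ν ∈ r.splits, p ν := by
  simp only [splits, List.forall_mem_cons, List.forall_mem_append]

lemma mem_splits_node :
    ν ∈ (node l r).splits ↔ ν = (l, r) ∨ ν ∈ l.splits ∨ ν ∈ r.splits := by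
  simp only [splits, List.mem_cons, List.mem_append]

lemma leaves_subset_of_mem_splits :
    ∀ {τ : ClusterTree ι}, ν ∈ τ.splits → ν.1.leaves ∪ ν.2.leaves ⊆ τ.leaves
  | node l r, h => by
    rcases mem_splits_node.1 h with rfl | h | h
    · exact subset_rfl
    · exact (leaves_subset_of_mem_splits h).trans Finset.subset_union_left
    · exact (leaves_subset_of_mem_splits h).trans Finset.subset_union_right

lemma mem_splits_of_mem_subsplits :
    ∀ {τ : ClusterTree ι}, ν ∈ τ.splits → κ ∈ subsplits ν → κ ∈ τ.splits
  | node l r, hν, hκ => by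
    rcases mem_splits_node.1 hν with rfl | hν | hν
    · exact List.mem_cons_of_mem _ hκ
    · exact mem_splits_node.2 (.inr (.inl (mem_splits_of_mem_subsplits hν hκ)))
    · exact mem_splits_node.2 (.inr (.inr (mem_splits_of_mem_subsplits hν hκ)))

lemma leaves_subset_of_mem_subsplits (h : κ ∈ subsplits ν) :
    κ.1.leaves ∪ κ.2.leaves ⊆ ν.1.leaves ∪ ν.2.leaves :=
  leaves_subset_of_mem_splits (τ := node ν.1 ν.2) (List.mem_cons_of_mem _ h)

lemma nodup_node :
    (node l r).Nodup ↔ Disjoint l.leaves r.leaves ∧ l.Nodup ∧ r.Nodup :=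
  forall_mem_splits_node

lemma Nodup.length_splits : ∀ {τ : ClusterTree ι}, τ.Nodup → τ.splits.length + 1 = τ.leaves.card
  | leaf i, _ => by simp [splits, leaves]
  | node l r, h => by
    obtain ⟨hd, hl, hr⟩ := nodup_node.1 h
    rw [leaves, Finset.card_union_of_disjoint hd, ← hl.length_splits, ← hr.length_splits]
    simp only [splits, List.length_cons, List.length_append]
    omega

lemma finite_setOf_length_splits_le [Finite ι] (k : ℕ) :
    {τ : ClusterTree ι | τ.splits.length ≤ k}.Finite := by
  induction k with
  | zero =>
    refine (Set.finite_range leaf).subset fun τ hτ => ?_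
    cases τ with
    | leaf i => exact ⟨i, rfl⟩
    | node l r => simp [splits] at hτ
  | succ k ih =>
    refine ((Set.finite_range leaf).union (ih.image2 node ih)).subset fun τ hτ => ?_
    cases τ with
    | leaf i => exact .inl ⟨i, rfl⟩
    | node l r =>
      simp only [splits, List.length_cons, List.length_append, Set.mem_ofPred_eq] at hτ
      exact .inr ⟨l, (by omega : l.splits.length ≤ k), r, (by omega : r.splits.length ≤ k), rfl⟩

lemma finite_setOf_nodup (ι : Type*) [Finite ι] : {τ : ClusterTree ι | τ.Nodup}.Finite := by
  have := Fintype.ofFinite ι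
  refine (finite_setOf_length_splits_le (Fintype.card ι)).subset fun τ hτ => ?_
  calc τ.splits.length ≤ τ.leaves.card := (Nodup.length_splits hτ).le.trans' (Nat.le_succ _)
    _ ≤ Fintype.card ι := Finset.card_le_univ _

lemma leaves_subset_left (h : ν ∈ τ.splits) : ν.1.leaves ⊆ τ.leaves :=
  Finset.subset_union_left.trans (leaves_subset_of_mem_splits h)

lemma leaves_subset_right (h : ν ∈ τ.splits) : ν.2.leaves ⊆ τ.leaves :=
  Finset.subset_union_right.trans (leaves_subset_of_mem_splits h)

lemma Nodup.base_notMem_right :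
    ∀ {τ : ClusterTree ι}, τ.Nodup → ν ∈ τ.splits → τ.base ∉ ν.2.leaves
  | node l r, hτ, hν => by
    obtain ⟨hd, hl, -⟩ := nodup_node.1 hτ
    have hbase := Finset.disjoint_left.1 hd l.base_mem_leaves
    rcases mem_splits_node.1 hν with rfl | hν | hν
    · exact hbase
    · exact hl.base_notMem_right hν
    · exact fun h => hbase (leaves_subset_right hν h)

lemma Nodup.base_mem_right_iff (hτ : τ.Nodup) (hν : ν ∈ τ.splits) (hκ : κ ∈ τ.splits)
    (hne : κ ≠ ν) : κ.1.base ∈ ν.2.leaves ↔ κ.2.base ∈ ν.2.leaves := by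
  have left_base {σ : ClusterTree ι} (h : κ ∈ σ.splits) : κ.1.base ∈ σ.leaves :=
    leaves_subset_left h κ.1.base_mem_leaves
  have right_base {σ : ClusterTree ι} (h : κ ∈ σ.splits) : κ.2.base ∈ σ.leaves :=
    leaves_subset_right h κ.2.base_mem_leaves
  induction τ with
  | leaf i => cases hν
  | node l r ihl ihr =>
    obtain ⟨hd, hl, hr⟩ := nodup_node.1 hτ
    have hdl {x} (hx : x ∈ l.leaves) : x ∉ r.leaves := Finset.disjoint_left.1 hd hx
    have hdr {x} (hx : x ∈ r.leaves) : x ∉ l.leaves := Finset.disjoint_right.1 hd hx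
    rcases mem_splits_node.1 hν with rfl | hν | hν <;>
      rcases mem_splits_node.1 hκ with rfl | hκ | hκ
    · exact absurd rfl hne
    · exact iff_of_false (hdl (left_base hκ)) (hdl (right_base hκ))
    · exact iff_of_true (left_base hκ) (right_base hκ)
    · exact iff_of_false (hl.base_notMem_right hν)
        fun h => hdr r.base_mem_leaves (leaves_subset_right hν h)
    · exact ihl hl hν hκ
    · exact iff_of_false (fun h => hdr (left_base hκ) (leaves_subset_right hν h))
        fun h => hdr (right_base hκ) (leaves_subset_right hν h)
    · exact iff_of_false (fun h => hdl l.base_mem_leaves (leaves_subset_right hν h))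
        (hr.base_notMem_right hν)
    · exact iff_of_false (fun h => hdl (left_base hκ) (leaves_subset_right hν h))
        fun h => hdl (right_base hκ) (leaves_subset_right hν h)
    · exact ihr hr hν hκ

end ClusterTree

open ClusterTree

section Clustering

variable {ι X : Type*} [MetricSpace X] {N : ℕ} {pt : ι → X}

/-- A merge `ν` of two clusters of at most `N` points is well separated: seen from the base point
of the first cluster and at a suitable scale `h`, the first cluster lies within `j * h`, while the
second one lies between `(j + 1) * h` and `N * h`. -/
def WellSeparated (N : ℕ) (pt : ι → X) (ν : ClusterTree ι × ClusterTree ι) : Prop :=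
  ∃ h : ℝ, 0 < h ∧ ∃ j : ℕ, j < N ∧
    (∀ x ∈ ν.1.leaves, dist (pt ν.1.base) (pt x) ≤ j * h) ∧
    ∀ x ∈ ν.2.leaves, (j + 1) * h ≤ dist (pt ν.1.base) (pt x) ∧
      dist (pt ν.1.base) (pt x) ≤ N * h

lemma exists_gap {S : Finset ι} {a : ι} (ha : a ∈ S) (hS : S.card ≤ N) {d : ι → ℝ}
    (hd : d a = 0) {h : ℝ} (hh : 0 < h) :
    ∃ j < N, ∀ x ∈ S, d x ≤ j * h ∨ (j + 1) * h ≤ d x := by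
  have hcard : ((S.erase a).image fun x => ⌈d x / h⌉₊).card < (Finset.Icc 1 N).card := by
    rw [Nat.card_Icc, Nat.add_sub_cancel]
    exact Finset.card_image_le.trans_lt ((Finset.card_erase_lt_of_mem ha).trans_le hS)
  obtain ⟨k, hk, hgap⟩ := Finset.exists_mem_notMem_of_card_lt_card hcard
  obtain ⟨hk1, hkN⟩ := Finset.mem_Icc.1 hk
  obtain ⟨j, rfl⟩ := Nat.exists_eq_add_of_le' hk1
  refine ⟨j, hkN, fun x hx => ?_⟩
  obtain rfl | hxa := eq_or_ne x a
  · exact .inl (hd ▸ by positivity)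
  have hne : ⌈d x / h⌉₊ ≠ j + 1 := fun h =>
    hgap (Finset.mem_image.2 ⟨x, Finset.mem_erase.2 ⟨hxa, hx⟩, h⟩)
  rcases lt_or_gt_of_ne hne with hlt | hlt
  · exact .inl ((div_le_iff₀ hh).1 (Nat.ceil_le.1 (Nat.lt_succ_iff.1 hlt)))
  · exact .inr ((le_div_iff₀ hh).1 (by exact_mod_cast (Nat.lt_ceil.1 hlt).le))

lemma exists_wellSeparated_partition (hpt : Function.Injective pt) {S : Finset ι} (hS : S.card ≤ N)
    {a b : ι} (ha : a ∈ S) (hb : b ∈ S) (hba : b ≠ a) :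
    ∃ c, ∃ Sl Sr : Finset ι, Sl ∪ Sr = S ∧ Disjoint Sl Sr ∧ a ∈ Sl ∧ c ∈ Sr ∧
      ∀ l r : ClusterTree ι, l.base = a → l.leaves = Sl → r.leaves = Sr →
        WellSeparated N pt (l, r) := by
  obtain ⟨c, hc, hmax⟩ := S.exists_max_image (fun x => dist (pt a) (pt x)) ⟨a, ha⟩
  have hac : 0 < dist (pt a) (pt c) := (dist_pos.2 (hpt.ne hba.symm)).trans_le (hmax b hb)
  have hN : (0 : ℝ) < N := by exact_mod_cast (Finset.card_pos.2 ⟨a, ha⟩).trans_le hS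
  set h := dist (pt a) (pt c) / N with hh
  have hh0 : 0 < h := by positivity
  have hNh : N * h = dist (pt a) (pt c) := mul_div_cancel₀ _ hN.ne'
  obtain ⟨j, hj, hgap⟩ := exists_gap ha hS (d := fun x => dist (pt a) (pt x)) (dist_self _) hh0
  refine ⟨c, S.filter fun x => dist (pt a) (pt x) ≤ j * h,
    S.filter fun x => ¬ dist (pt a) (pt x) ≤ j * h, Finset.filter_union_filter_not_eq _ _,
    Finset.disjoint_filter_filter_not _ _ _, ?_, ?_, ?_⟩
  · exact Finset.mem_filter.2 ⟨ha, by rw [dist_self]; positivity⟩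
  · refine Finset.mem_filter.2 ⟨hc, ?_⟩
    rw [not_le, ← hNh]
    exact mul_lt_mul_of_pos_right (by exact_mod_cast hj) hh0
  · rintro l r rfl hl hr
    refine ⟨h, hh0, j, hj, fun x hx => ?_, fun x hx => ?_⟩
    · simp only [hl, Finset.mem_filter] at hx
      exact hx.2
    · simp only [hr, Finset.mem_filter] at hx
      obtain ⟨hxS, hx⟩ := hx
      exact ⟨(hgap x hxS).resolve_left hx, hNh ▸ hmax x hxS⟩

theorem exists_wellSeparated_clustering (hpt : Function.Injective pt) {S : Finset ι}
    (hS : S.card ≤ N) {a : ι} (ha : a ∈ S) :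
    ∃ τ : ClusterTree ι, τ.base = a ∧ τ.leaves = S ∧ ∀ ν ∈ τ.splits, WellSeparated N pt ν := by
  induction S using Finset.strongInduction generalizing a with
  | H S ih =>
  by_cases hsingle : ∃ b ∈ S, b ≠ a
  · obtain ⟨b, hb, hba⟩ := hsingle
    obtain ⟨c, Sl, Sr, rfl, hd, ha, hc, hsep⟩ :=
      exists_wellSeparated_partition hpt hS ha hb hba
    have hSl : Sl ⊂ Sl ∪ Sr := Finset.ssubset_iff_of_subset Finset.subset_union_left |>.2
      ⟨c, Finset.mem_union_right _ hc, Finset.disjoint_right.1 hd hc⟩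
    have hSr : Sr ⊂ Sl ∪ Sr := Finset.ssubset_iff_of_subset Finset.subset_union_right |>.2
      ⟨a, Finset.mem_union_left _ ha, Finset.disjoint_left.1 hd ha⟩
    obtain ⟨l, hla, hl, hlsep⟩ := ih Sl hSl ((Finset.card_lt_card hSl).le.trans hS) ha
    obtain ⟨r, -, hr, hrsep⟩ := ih Sr hSr ((Finset.card_lt_card hSr).le.trans hS) hc
    exact ⟨node l r, hla, by rw [leaves, hl, hr],
      forall_mem_splits_node.2 ⟨hsep l r hla hl hr, hlsep, hrsep⟩⟩
  · push Not at hsingle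
    exact ⟨leaf a, rfl, (Finset.eq_singleton_iff_unique_mem.2 ⟨ha, hsingle⟩).symm, by
      simp only [splits, List.not_mem_nil, false_imp_iff, implies_true]⟩

namespace WellSeparated

variable {ν κ : ClusterTree ι × ClusterTree ι}

lemma disjoint_leaves (hν : WellSeparated N pt ν) : Disjoint ν.1.leaves ν.2.leaves := by
  obtain ⟨h, hh, j, -, hl, hr⟩ := hν
  exact Finset.disjoint_left.2 fun x hxl hxr => by nlinarith [hl x hxl, (hr x hxr).1]

lemma dist_base_pos (hν : WellSeparated N pt ν) : 0 < dist (pt ν.1.base) (pt ν.2.base) := by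
  obtain ⟨h, hh, j, -, -, hr⟩ := hν
  exact (by positivity : 0 < (j + 1) * h).trans_le (hr _ ν.2.base_mem_leaves).1

lemma dist_base_le (hν : WellSeparated N pt ν) {x : ι} (hx : x ∈ ν.1.leaves ∪ ν.2.leaves) :
    dist (pt ν.1.base) (pt x) ≤ N * dist (pt ν.1.base) (pt ν.2.base) := by
  obtain ⟨h, hh, j, hj, hl, hr⟩ := hν
  have hscale : h ≤ dist (pt ν.1.base) (pt ν.2.base) :=
    (le_mul_of_one_le_left hh.le (by simp)).trans (hr _ ν.2.base_mem_leaves).1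
  calc dist (pt ν.1.base) (pt x) ≤ N * h := by
        rcases Finset.mem_union.1 hx with hx | hx
        · exact (hl x hx).trans (by gcongr)
        · exact (hr x hx).2
    _ ≤ _ := by gcongr

lemma dist_base_le_of_mem_subsplits (hν : WellSeparated N pt ν) (hκ : κ ∈ subsplits ν) :
    dist (pt κ.1.base) (pt κ.2.base) ≤ 2 * N * dist (pt ν.1.base) (pt ν.2.base) := by
  have hsub := leaves_subset_of_mem_subsplits hκ
  have h₁ := hν.dist_base_le (hsub (Finset.mem_union_left _ κ.1.base_mem_leaves))
  have h₂ := hν.dist_base_le (hsub (Finset.mem_union_right _ κ.2.base_mem_leaves))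
  linarith [dist_triangle_left (pt κ.1.base) (pt κ.2.base) (pt ν.1.base)]

end WellSeparated

end Clustering

open IsLocalRing

/-! ### Residues over a valuation ring -/

section Residue

/-- A family of vectors is linearly independent modulo the subspace `R`. -/
def IndependentModulo {k F κ : Type*} [Field k] [AddCommGroup F] [Module k F] [Fintype κ]
    (R : Submodule k F) (v : κ → F) : Prop :=
  ∀ c : κ → k, ∑ i, c i • v i ∈ R → ∀ i, c i = 0

lemma exists_independentModulo {k F : Type*} [Field k] [AddCommGroup F] [Module k F]
    [FiniteDimensional k F] {R N : Submodule k F} (h : R ≤ N) :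
    ∃ (g : ℕ) (v : Fin g → F), (∀ i, v i ∈ N) ∧ Module.finrank k R + g = Module.finrank k N ∧
      IndependentModulo R v := by
  obtain ⟨Q, hQ⟩ := Submodule.exists_isCompl (R.submoduleOf N)
  let b := Module.finBasis k Q
  refine ⟨Module.finrank k Q, fun i => ((b i : N) : F), fun i => Submodule.coe_mem _, ?_, ?_⟩
  · rw [← (Submodule.submoduleOfEquivOfLe h).finrank_eq]
    exact Submodule.finrank_add_eq_of_isCompl hQ
  · intro c hc
    have hmem : ((∑ i, c i • b i : Q) : N) ∈ R.submoduleOf N := by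
      simpa [Submodule.submoduleOf] using hc
    have hzero : ∑ i, c i • b i = 0 :=
      Subtype.ext (Submodule.disjoint_def.1 hQ.disjoint _ hmem (Submodule.coe_mem _))
    exact Fintype.linearIndependent_iff.1 b.linearIndependent c hzero

instance {R : Type*} [CommRing R] [IsLocalRing R] : RingHomSurjective (residue R) :=
  ⟨residue_surjective⟩

variable {K : Type*} [Field K] {A : ValuationSubring K}

lemma exists_dominating_coeff {κ : Type*} [Finite κ] (c : κ → K) {i : κ}
    (hi : c i ≠ 0) :
    ∃ j, c j ≠ 0 ∧ (∀ k, (c j)⁻¹ * c k ∈ A) ∧ A.valuation (c i) ≤ A.valuation (c j) := by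
  have : Nonempty κ := ⟨i⟩
  obtain ⟨j, hj⟩ := Finite.exists_max fun k => A.valuation (c k)
  have hvj : 0 < A.valuation (c j) := ((Valuation.pos_iff _).2 hi).trans_le (hj i)
  refine ⟨j, (Valuation.pos_iff _).1 hvj, fun k => ?_, hj i⟩
  rw [← A.valuation_le_one_iff, map_mul, map_inv₀, inv_mul_le_one₀ hvj]
  exact hj k

variable {E F V : Type*} [AddCommGroup E] [Module A E] [AddCommGroup F] [Module (ResidueField A) F]
  [AddCommGroup V] [Module K V] {ρ : E →ₛₗ[residue A] F} {φ : E →ₗ[A] V}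

/-- Every integral vector of `Y`, i.e. one lying in the lattice `W`, is the image under `φ` of an
element of `M` with zero residue. Such a subspace `Y` is what a drop of the residue rank leaves
behind. -/
def LiftsResidueFree (ρ : E →ₛₗ[residue A] F) (φ : E →ₗ[A] V) (M : Submodule A E)
    (W : Submodule A V) (Y : Submodule K V) : Prop :=
  ∀ y ∈ Y, y ∈ W → ∃ s ∈ M, ρ s = 0 ∧ φ s = y

lemma LiftsResidueFree.mono {M M' : Submodule A E} {W : Submodule A V} {Y : Submodule K V}
    (hY : LiftsResidueFree ρ φ M W Y) (hM : M ≤ M') : LiftsResidueFree ρ φ M' W Y :=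
  fun y hy hw => let ⟨s, hs, h⟩ := hY y hy hw; ⟨s, hM hs, h⟩

section Enlarge

variable {N : Submodule A E} {W W' : Submodule A V} {Y : Submodule K V}
  {κ : Type*} [Fintype κ] {s : κ → E}

lemma LiftsResidueFree.exists_lift (hY : LiftsResidueFree ρ φ N W' Y) (hW : W ≤ W')
    (hN : N ≤ W'.comap φ) (hs : ∀ i, s i ∈ N)
    (hind : IndependentModulo ((N ⊓ W.comap φ).map ρ) fun i => ρ (s i))
    {c : κ → A} {y : V} (hy : y ∈ Y) (hw : y + ∑ i, c i • φ (s i) ∈ W) :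
    (∃ p ∈ N ⊓ W.comap φ, ρ p = 0 ∧ φ p = y + ∑ i, c i • φ (s i)) ∧
      ∀ i, residue A (c i) = 0 := by
  have hsum : ∑ i, c i • s i ∈ N := N.sum_mem fun i _ => N.smul_mem _ (hs i)
  have hφsum : φ (∑ i, c i • s i) = ∑ i, c i • φ (s i) := by simp only [map_sum, map_smul]
  have hyW : y ∈ W' := by
    simpa only [hφsum, add_sub_cancel_right] using W'.sub_mem (hW hw) (hN hsum)
  obtain ⟨q, hqN, hq0, hqy⟩ := hY y hy hyW
  have hφq : φ (q + ∑ i, c i • s i) = y + ∑ i, c i • φ (s i) := by rw [map_add, hφsum, hqy]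
  have hmem : q + ∑ i, c i • s i ∈ N ⊓ W.comap φ :=
    ⟨N.add_mem hqN hsum, Submodule.mem_comap.2 (hφq ▸ hw)⟩
  have hρq : ρ (q + ∑ i, c i • s i) = ∑ i, residue A (c i) • ρ (s i) := by
    simp only [map_add, hq0, zero_add, map_sum, map_smulₛₗ]
  have hres : ∀ i, residue A (c i) = 0 :=
    hind _ (hρq ▸ Submodule.mem_map_of_mem hmem)
  refine ⟨⟨_, hmem, ?_, hφq⟩, hres⟩
  simp only [hρq, hres, zero_smul, Finset.sum_const_zero]

lemma LiftsResidueFree.valuation_coeff_lt_one (hY : LiftsResidueFree ρ φ N W' Y) (hW : W ≤ W')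
    (hN : N ≤ W'.comap φ) (hs : ∀ i, s i ∈ N)
    (hind : IndependentModulo ((N ⊓ W.comap φ).map ρ) fun i => ρ (s i))
    {c : κ → K} {y : V} (hy : y ∈ Y) (hw : y + ∑ i, c i • φ (s i) ∈ W) (i : κ) :
    A.valuation (c i) < 1 := by
  by_contra! hi
  have hi0 : c i ≠ 0 := fun h => by simp [h] at hi
  obtain ⟨j, hj, hint, hij⟩ := exists_dominating_coeff (A := A) c hi0
  have hinv : (c j)⁻¹ ∈ A := by
    rw [← A.valuation_le_one_iff, map_inv₀]
    exact inv_le_one_of_one_le₀ (hi.trans hij)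
  have hscaled : (c j)⁻¹ • y + ∑ k, (⟨_, hint k⟩ : A) • φ (s k) ∈ W := by
    have h := W.smul_mem (⟨_, hinv⟩ : A) hw
    have hsmul : ∀ (a : K) (ha : a ∈ A) (v : V), (⟨a, ha⟩ : A) • v = a • v := fun _ _ _ => rfl
    simpa only [hsmul, smul_add, Finset.smul_sum, smul_smul] using h
  have hone : (⟨_, hint j⟩ : A) = 1 := Subtype.ext (inv_mul_cancel₀ hj)
  have := (hY.exists_lift hW hN hs hind (Y.smul_mem _ hy) hscaled).2 j
  rw [hone, map_one] at this
  exact one_ne_zero this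

lemma LiftsResidueFree.coeff_eq_zero (hY : LiftsResidueFree ρ φ N W' Y) (hW : W ≤ W')
    (hN : N ≤ W'.comap φ) (hs : ∀ i, s i ∈ N)
    (hind : IndependentModulo ((N ⊓ W.comap φ).map ρ) fun i => ρ (s i))
    {c : κ → K} (hc : ∑ i, c i • φ (s i) ∈ Y) : c = 0 := by
  by_contra hne
  obtain ⟨i, hi⟩ := Function.ne_iff.1 hne
  have hrel : -(c i)⁻¹ • ∑ j, c j • φ (s j) + ∑ j, ((c i)⁻¹ * c j) • φ (s j) = 0 := by
    simp only [Finset.smul_sum, smul_smul, ← Finset.sum_add_distrib, ← add_smul, neg_mul,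
      neg_add_cancel, zero_smul, Finset.sum_const_zero]
  have hlt := hY.valuation_coeff_lt_one hW hN hs hind (Y.smul_mem _ hc) (hrel ▸ W.zero_mem) i
  rw [inv_mul_cancel₀ hi, map_one] at hlt
  exact lt_irrefl _ hlt

lemma LiftsResidueFree.sup_span (hY : LiftsResidueFree ρ φ N W' Y) (hW : W ≤ W')
    (hN : N ≤ W'.comap φ) (hs : ∀ i, s i ∈ N)
    (hind : IndependentModulo ((N ⊓ W.comap φ).map ρ) fun i => ρ (s i)) :
    LiftsResidueFree ρ φ (N ⊓ W.comap φ) W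
      (Y ⊔ Submodule.span K (Set.range fun i => φ (s i))) := by
  intro z hz hw
  obtain ⟨y, hy, u, hu, rfl⟩ := Submodule.mem_sup.1 hz
  obtain ⟨c, rfl⟩ := (Submodule.mem_span_range_iff_exists_fun K).1 hu
  have hint (i) : c i ∈ A := (A.valuation_le_one_iff _).1
    (hY.valuation_coeff_lt_one hW hN hs hind hy hw i).le
  exact (hY.exists_lift hW hN hs hind (c := fun i => ⟨c i, hint i⟩) hy hw).1

end Enlarge

/-- Passing from `N` to the elements of `N` mapped into `W`, every dimension lost by the residue
image is gained by the residue-free subspace. -/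
theorem LiftsResidueFree.exists_enlarge [FiniteDimensional (ResidueField A) F]
    [FiniteDimensional K V] {N : Submodule A E} {W W' : Submodule A V} {Y : Submodule K V}
    (hY : LiftsResidueFree ρ φ N W' Y) (hW : W ≤ W') (hN : N ≤ W'.comap φ) :
    ∃ Y' : Submodule K V, LiftsResidueFree ρ φ (N ⊓ W.comap φ) W Y' ∧
      Module.finrank K Y' + Module.finrank (ResidueField A) ((N ⊓ W.comap φ).map ρ) =
        Module.finrank K Y + Module.finrank (ResidueField A) (N.map ρ) := by
  obtain ⟨g, v, hvN, hdim, hind⟩ := exists_independentModulo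
    (Submodule.map_mono (f := ρ) (inf_le_left : N ⊓ W.comap φ ≤ N))
  choose s hs hsv using hvN
  obtain rfl : (fun i => ρ (s i)) = v := funext hsv
  have hfree {c : Fin g → K} (hc : ∑ i, c i • φ (s i) ∈ Y) : c = 0 :=
    hY.coeff_eq_zero hW hN hs hind hc
  have hli : LinearIndependent K fun i => φ (s i) := Fintype.linearIndependent_iff.2
    fun c hc => congrFun (hfree (hc ▸ Y.zero_mem))
  have hdisj : Disjoint Y (Submodule.span K (Set.range fun i => φ (s i))) := by
    refine Submodule.disjoint_def.2 fun x hx hxs => ?_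
    obtain ⟨c, rfl⟩ := (Submodule.mem_span_range_iff_exists_fun K).1 hxs
    simp only [hfree hx, Pi.zero_apply, zero_smul, Finset.sum_const_zero]
  refine ⟨_, hY.sup_span hW hN hs hind, ?_⟩
  have hrank := Submodule.finrank_sup_add_finrank_inf_eq Y
    (Submodule.span K (Set.range fun i => φ (s i)))
  rw [hdisj.eq_bot, finrank_bot, finrank_span_eq_card hli, Fintype.card_fin] at hrank
  omega

end Residue

section Count

variable {K : Type*} [Field K] {A : ValuationSubring K} {E F V : Type*}
  [AddCommGroup E] [Module A E] [AddCommGroup F] [Module (ResidueField A) F]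
  [AddCommGroup V] [Module K V] {ρ : E →ₛₗ[residue A] F} {φ : E →ₗ[A] V}

/-- `n` is controlled by the residue rank of `M`, up to a power of two whose exponent is the
dimension of a residue-free subspace. -/
def ResidueCount (ρ : E →ₛₗ[residue A] F) (φ : E →ₗ[A] V) (M : Submodule A E)
    (W : Submodule A V) (n : ℕ) : Prop :=
  ∃ Y : Submodule K V, LiftsResidueFree ρ φ M W Y ∧
    n ≤ Module.finrank (ResidueField A) (M.map ρ) * 2 ^ Module.finrank K Y

lemma residueCount_zero (M : Submodule A E) (W : Submodule A V) : ResidueCount ρ φ M W 0 := by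
  refine ⟨⊥, fun y hy _ => ⟨0, M.zero_mem, map_zero ρ, ?_⟩, Nat.zero_le _⟩
  rw [map_zero, (Submodule.mem_bot K).1 hy]

lemma add_le_mul_two_pow {n₁ n₂ u₁ u₂ f₁ f₂ u f f' : ℕ} (h₁ : n₁ ≤ u₁ * 2 ^ f₁)
    (h₂ : n₂ ≤ u₂ * 2 ^ f₂) (hf₁ : f₁ ≤ f') (hf₂ : f₂ ≤ f') (hu : 0 < u) (hle : u ≤ u₁ + u₂)
    (h : f + u = f' + (u₁ + u₂)) : n₁ + n₂ ≤ u * 2 ^ f := by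
  obtain ⟨g, hg⟩ := Nat.exists_eq_add_of_le hle
  obtain rfl : f = f' + g := by omega
  calc n₁ + n₂ ≤ u₁ * 2 ^ f' + u₂ * 2 ^ f' := by
        refine add_le_add (h₁.trans ?_) (h₂.trans ?_) <;> gcongr <;> norm_num
    _ = (u + g) * 2 ^ f' := by rw [← add_mul, hg]
    _ ≤ u * (g + 1) * 2 ^ f' := by gcongr; nlinarith
    _ ≤ u * 2 ^ g * 2 ^ f' := by gcongr; exact Nat.lt_two_pow_self
    _ = u * 2 ^ (f' + g) := by ring

theorem ResidueCount.node [FiniteDimensional (ResidueField A) F] [FiniteDimensional K V]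
    {M₁ M₂ : Submodule A E} {W W' : Submodule A V} {n₁ n₂ : ℕ}
    (h₁ : ResidueCount ρ φ M₁ W' n₁) (h₂ : ResidueCount ρ φ M₂ W' n₂) (hW : W ≤ W')
    (hM₁ : M₁ ≤ W'.comap φ) (hM₂ : M₂ ≤ W'.comap φ) (hdisj : Disjoint (M₁.map ρ) (M₂.map ρ))
    (hne : ((M₁ ⊔ M₂) ⊓ W.comap φ).map ρ ≠ ⊥) :
    ResidueCount ρ φ ((M₁ ⊔ M₂) ⊓ W.comap φ) W (n₁ + n₂) := by
  obtain ⟨Y₁, hY₁, hn₁⟩ := h₁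
  obtain ⟨Y₂, hY₂, hn₂⟩ := h₂
  obtain ⟨Y, hY, hf₁, hf₂⟩ : ∃ Y : Submodule K V, LiftsResidueFree ρ φ (M₁ ⊔ M₂) W' Y ∧
      Module.finrank K Y₁ ≤ Module.finrank K Y ∧ Module.finrank K Y₂ ≤ Module.finrank K Y := by
    rcases le_total (Module.finrank K Y₁) (Module.finrank K Y₂) with h | h
    · exact ⟨Y₂, hY₂.mono le_sup_right, h, le_rfl⟩
    · exact ⟨Y₁, hY₁.mono le_sup_left, le_rfl, h⟩
  obtain ⟨Y', hY', hrank⟩ := hY.exists_enlarge hW (sup_le hM₁ hM₂)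
  have hsup : Module.finrank (ResidueField A) ((M₁ ⊔ M₂).map ρ) =
      Module.finrank (ResidueField A) (M₁.map ρ) + Module.finrank (ResidueField A) (M₂.map ρ) := by
    rw [Submodule.map_sup, ← Submodule.finrank_sup_add_finrank_inf_eq, hdisj.eq_bot, finrank_bot,
      add_zero]
  have hpos : 0 < Module.finrank (ResidueField A) (((M₁ ⊔ M₂) ⊓ W.comap φ).map ρ) :=
    Nat.pos_of_ne_zero (mt Submodule.finrank_eq_zero.1 hne)
  have hle := Submodule.finrank_mono
    (Submodule.map_mono (f := ρ) (inf_le_left : (M₁ ⊔ M₂) ⊓ W.comap φ ≤ _))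
  rw [hsup] at hrank hle
  exact ⟨Y', hY', add_le_mul_two_pow hn₁ hn₂ hf₁ hf₂ hpos hle hrank⟩

end Count

section Balanced

variable {K : Type*} [Field K] {A : ValuationSubring K} {ι V : Type*} [Fintype ι]
  [AddCommGroup V] [Module K V]

/-- Coordinatewise reduction modulo the maximal ideal. -/
def coordResidue (A : ValuationSubring K) (ι : Type*) :
    (ι → A) →ₛₗ[residue A] (ι → ResidueField A) where
  toFun s i := residue A (s i)
  map_add' _ _ := funext fun _ => map_add _ _ _
  map_smul' _ _ := funext fun _ => map_mul _ _ _

/-- The integral multipliers `s`, supported on the points of `τ` belonging to `S`, for which the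
multiplied stress `s • lam` is balanced along `τ`: the stress transmitted into the second cluster of
each split `ν` lies in the lattice `W ν`, and the total stress lies in `Wo`. -/
def balanced (lam : ι → V) (W : ClusterTree ι × ClusterTree ι → Submodule A V) (S : Finset ι)
    (τ : ClusterTree ι) (Wo : Submodule A V) : Submodule A (ι → A) where
  carrier := {s | (∀ i ∉ S ∩ τ.leaves, s i = 0) ∧
    (∀ ν ∈ τ.splits, ∑ i ∈ ν.2.leaves, s i • lam i ∈ W ν) ∧ ∑ i, s i • lam i ∈ Wo}
  zero_mem' := by
    simp only [Set.mem_ofPred_eq, Pi.zero_apply, zero_smul, Finset.sum_const_zero,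
      Submodule.zero_mem, implies_true, and_self]
  add_mem' := by
    rintro s t ⟨hs, hsW, hso⟩ ⟨ht, htW, hto⟩
    simp only [Set.mem_ofPred_eq, Pi.add_apply, add_smul, Finset.sum_add_distrib]
    exact ⟨fun i hi => by rw [hs i hi, ht i hi, add_zero],
      fun ν hν => (W ν).add_mem (hsW ν hν) (htW ν hν), Wo.add_mem hso hto⟩
  smul_mem' := by
    rintro c s ⟨hs, hsW, hso⟩
    simp only [Set.mem_ofPred_eq, Pi.smul_apply, smul_assoc, ← Finset.smul_sum]
    exact ⟨fun i hi => by rw [hs i hi, smul_zero], fun ν hν => (W ν).smul_mem c (hsW ν hν),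
      Wo.smul_mem c hso⟩

variable {lam : ι → V} {W : ClusterTree ι × ClusterTree ι → Submodule A V} {S : Finset ι}
  {l r τ : ClusterTree ι} {Wo : Submodule A V} {s : ι → A}

lemma balanced_le_comap :
    balanced lam W S τ Wo ≤ Wo.comap (Fintype.linearCombination A lam) :=
  fun _ hs => hs.2.2

lemma sum_univ_indicator (T : Finset ι) (s : ι → A) :
    ∑ i, Set.indicator T s i • lam i = ∑ i ∈ T, s i • lam i := by
  simp only [Set.indicator_apply, Finset.mem_coe, ite_smul, zero_smul, Finset.sum_ite_mem,
    Finset.univ_inter]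

lemma sum_univ_of_mem_balanced (hs : s ∈ balanced lam W S τ Wo) :
    ∑ i, s i • lam i = ∑ i ∈ τ.leaves, s i • lam i := by
  refine (Finset.sum_subset (Finset.subset_univ _) fun i _ hi => ?_).symm
  rw [hs.1 i fun h => hi (Finset.mem_of_mem_inter_right h), zero_smul]

lemma sum_eq_zero_of_mem_balanced (hs : s ∈ balanced lam W S τ Wo) {T : Finset ι}
    (hT : Disjoint T τ.leaves) : ∑ i ∈ T, s i • lam i = 0 :=
  Finset.sum_eq_zero fun i hi => by
    rw [hs.1 i fun h => Finset.disjoint_left.1 hT hi (Finset.mem_of_mem_inter_right h), zero_smul]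

lemma indicator_leaves_mem_balanced (hsupp : ∀ i ∉ S, s i = 0)
    (hs : ∀ ν ∈ τ.splits, ∑ i ∈ ν.2.leaves, s i • lam i ∈ W ν)
    (hWo : ∑ i ∈ τ.leaves, s i • lam i ∈ Wo) :
    Set.indicator τ.leaves s ∈ balanced lam W S τ Wo := by
  refine ⟨fun i hi => ?_, fun ν hν => ?_, by rwa [sum_univ_indicator]⟩
  · by_cases hτ : i ∈ τ.leaves
    · exact (Set.indicator_of_mem hτ s).trans
        (hsupp i fun hS => hi (Finset.mem_inter.2 ⟨hS, hτ⟩))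
    · exact Set.indicator_of_notMem hτ s
  · rw [Finset.sum_congr rfl fun i hi =>
      by rw [Set.indicator_of_mem (Finset.mem_coe.2 (leaves_subset_right hν hi))]]
    exact hs ν hν

lemma indicator_leaves_mem_balanced_of_node (hd : Disjoint l.leaves r.leaves) (hWo : Wo ≤ W (l, r))
    (hs : s ∈ balanced lam W S (node l r) Wo) :
    Set.indicator l.leaves s ∈ balanced lam W S l (W (l, r)) ∧
      Set.indicator r.leaves s ∈ balanced lam W S r (W (l, r)) := by
  obtain ⟨hlr, hl, hr⟩ := forall_mem_splits_node.1 hs.2.1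
  have htotal : ∑ i ∈ l.leaves, s i • lam i + ∑ i ∈ r.leaves, s i • lam i ∈ W (l, r) := by
    rw [← Finset.sum_union hd]
    exact hWo (sum_univ_of_mem_balanced hs ▸ hs.2.2)
  have hsupp : ∀ i ∉ S, s i = 0 := fun i hi => hs.1 i fun h => hi (Finset.mem_of_mem_inter_left h)
  exact ⟨indicator_leaves_mem_balanced hsupp hl (((W (l, r)).add_mem_iff_left hlr).1 htotal),
    indicator_leaves_mem_balanced hsupp hr hlr⟩

lemma balanced_node (hd : Disjoint l.leaves r.leaves) (hWo : Wo ≤ W (l, r)) :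
    balanced lam W S (node l r) Wo =
      (balanced lam W S l (W (l, r)) ⊔ balanced lam W S r (W (l, r))) ⊓
        Wo.comap (Fintype.linearCombination A lam) := by
  apply le_antisymm
  · refine fun s hs => ⟨?_, hs.2.2⟩
    obtain ⟨hl, hr⟩ := indicator_leaves_mem_balanced_of_node hd hWo hs
    have hsplit : Set.indicator l.leaves s + Set.indicator r.leaves s = s := by
      refine (Set.indicator_union_of_disjoint (Finset.disjoint_coe.2 hd) s).symm.trans
        (Set.indicator_eq_self.2 (Function.support_subset_iff'.2 fun i hi => hs.1 i fun h => hi ?_))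
      exact (Finset.mem_union.1 (Finset.mem_of_mem_inter_right h))
    exact hsplit ▸ Submodule.add_mem_sup hl hr
  · rintro s ⟨hs, hso⟩
    obtain ⟨a, ha, b, hb, rfl⟩ := Submodule.mem_sup.1 hs
    have hsum (T : Finset ι) : ∑ i ∈ T, (a + b) i • lam i =
        ∑ i ∈ T, a i • lam i + ∑ i ∈ T, b i • lam i := by
      simp only [Pi.add_apply, add_smul, Finset.sum_add_distrib]
    refine ⟨fun i hi => ?_, forall_mem_splits_node.2 ⟨?_, fun ν hν => ?_, fun ν hν => ?_⟩, hso⟩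
    · rw [leaves, Finset.inter_union_distrib_left, Finset.notMem_union] at hi
      rw [Pi.add_apply, ha.1 i hi.1, hb.1 i hi.2, add_zero]
    · rw [hsum, sum_eq_zero_of_mem_balanced ha hd.symm, zero_add, ← sum_univ_of_mem_balanced hb]
      exact hb.2.2
    · rw [hsum, sum_eq_zero_of_mem_balanced hb (hd.mono_left (leaves_subset_right hν)), add_zero]
      exact ha.2.1 ν hν
    · rw [hsum, sum_eq_zero_of_mem_balanced ha (hd.symm.mono_left (leaves_subset_right hν)),
        zero_add]
      exact hb.2.1 ν hν

lemma disjoint_map_coordResidue_balanced (hd : Disjoint l.leaves r.leaves)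
    (Wl Wr : Submodule A V) :
    Disjoint ((balanced lam W S l Wl).map (coordResidue A ι))
      ((balanced lam W S r Wr).map (coordResidue A ι)) := by
  rw [Submodule.disjoint_def]
  rintro _ ⟨a, ha, rfl⟩ ⟨b, hb, hab⟩
  funext i
  by_cases hi : i ∈ l.leaves
  · have hbi := hb.1 i fun h => Finset.disjoint_left.1 hd hi (Finset.mem_of_mem_inter_right h)
    rw [← hab]
    exact (congrArg (residue A) hbi).trans (map_zero (residue A))
  · have hai := ha.1 i fun h => hi (Finset.mem_of_mem_inter_right h)
    exact (congrArg (residue A) hai).trans (map_zero (residue A))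

lemma map_coordResidue_balanced_ne_bot {i : ι} (hi : i ∈ S ∩ τ.leaves)
    (hone : Set.indicator ↑(S ∩ τ.leaves) 1 ∈ balanced lam W S τ Wo) :
    (balanced lam W S τ Wo).map (coordResidue A ι) ≠ ⊥ := by
  refine (Submodule.ne_bot_iff _).2 ⟨_, Submodule.mem_map_of_mem hone, fun h => ?_⟩
  have hres : residue A 1 = 0 := by
    simpa only [coordResidue, LinearMap.coe_mk, AddHom.coe_mk, Pi.zero_apply,
      Set.indicator_of_mem (Finset.mem_coe.2 hi), Pi.one_apply] using congrFun h i
  exact one_ne_zero ((map_one _).symm.trans hres)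

/-- Induction on the tree: at a split the counts of the two clusters add up, and imposing the
balance condition of the parent trades residue rank for residue-free dimensions. -/
theorem residueCount_balanced [FiniteDimensional K V] (hτ : τ.Nodup)
    (hWo : ∀ ν ∈ τ.splits, Wo ≤ W ν) (hW : ∀ ν ∈ τ.splits, ∀ κ ∈ subsplits ν, W ν ≤ W κ)
    (hone : Set.indicator ↑(S ∩ τ.leaves) 1 ∈ balanced lam W S τ Wo) :
    ResidueCount (coordResidue A ι) (Fintype.linearCombination A lam) (balanced lam W S τ Wo) Wo
      (S ∩ τ.leaves).card := by
  induction τ generalizing Wo with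
  | leaf i =>
    rcases (S ∩ (leaf i).leaves).eq_empty_or_nonempty with hempty | ⟨j, hj⟩
    · exact hempty ▸ residueCount_zero _ _
    · refine (residueCount_zero _ _).imp fun Y hY => ⟨hY.1, ?_⟩
      have hcard : (S ∩ (leaf i).leaves).card ≤ 1 :=
        (Finset.card_le_card Finset.inter_subset_right).trans_eq (Finset.card_singleton i)
      have hpos := Nat.pos_of_ne_zero
        (mt Submodule.finrank_eq_zero.1 (map_coordResidue_balanced_ne_bot hj hone))
      exact hcard.trans (Nat.mul_pos hpos (by positivity))
  | node l r ihl ihr =>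
    rcases (S ∩ (node l r).leaves).eq_empty_or_nonempty with hempty | ⟨j, hj⟩
    · exact hempty ▸ residueCount_zero _ _
    obtain ⟨hd, hl, hr⟩ := nodup_node.1 hτ
    obtain ⟨hWlr, hWl, hWr⟩ := forall_mem_splits_node.1 hW
    obtain ⟨hWol, -, -⟩ := forall_mem_splits_node.1 hWo
    have hrestrict (σ : ClusterTree ι) (hσ : σ.leaves ⊆ (node l r).leaves) :
        Set.indicator σ.leaves (Set.indicator ↑(S ∩ (node l r).leaves) (1 : ι → A)) =
          Set.indicator ↑(S ∩ σ.leaves) 1 := by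
      rw [Set.indicator_indicator, ← Finset.coe_inter, Finset.inter_left_comm,
        Finset.inter_eq_left.2 hσ]
    obtain ⟨honel, honer⟩ := indicator_leaves_mem_balanced_of_node hd hWol hone
    rw [hrestrict _ Finset.subset_union_left] at honel
    rw [hrestrict _ Finset.subset_union_right] at honer
    have hne := map_coordResidue_balanced_ne_bot hj hone
    have hcard : (S ∩ (node l r).leaves).card = (S ∩ l.leaves).card + (S ∩ r.leaves).card := by
      rw [leaves, Finset.inter_union_distrib_left, Finset.card_union_of_disjoint
        (hd.mono Finset.inter_subset_right Finset.inter_subset_right)]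
    rw [balanced_node hd hWol] at hne ⊢
    rw [hcard]
    exact (ihl hl (fun ν hν => hWlr ν (List.mem_append_left _ hν)) hWl honel).node
      (ihr hr (fun ν hν => hWlr ν (List.mem_append_right _ hν)) hWr honer) hWol
      balanced_le_comap balanced_le_comap (disjoint_map_coordResidue_balanced hd _ _) hne

end Balanced

section Normalize

variable {K : Type*} [Field K] {A : ValuationSubring K} {ι : Type*} {M : Submodule A (ι → A)}
  {S : Finset ι}

lemma exists_residue_ne_of_one_lt_finrank (hM : ∀ s ∈ M, ∀ i ∉ S, s i = 0)
    (hrank : 1 < Module.finrank (ResidueField A) (M.map (coordResidue A ι))) :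
    ∃ s ∈ M, ∃ i ∈ S, ∃ j ∈ S, residue A (s i) ≠ residue A (s j) := by
  by_contra! hconst
  refine hrank.not_ge ((Submodule.finrank_mono (?_ : _ ≤ Submodule.span (ResidueField A)
    {coordResidue A ι (Set.indicator S 1)})).trans (?_ : _ ≤ 1))
  swap
  · exact (finrank_span_le_card _).trans_eq (Set.toFinset_singleton _ ▸ Finset.card_singleton _)
  rintro _ ⟨s, hs, rfl⟩
  rw [Submodule.mem_span_singleton]
  have hval (i) : coordResidue A ι (Set.indicator S 1) i = if i ∈ S then 1 else 0 := by
    simp only [coordResidue, LinearMap.coe_mk, AddHom.coe_mk, Set.indicator_apply, Finset.mem_coe,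
      Pi.one_apply, apply_ite (residue A), map_one, map_zero]
  rcases S.eq_empty_or_nonempty with rfl | ⟨j, hj⟩
  · refine ⟨0, funext fun i => ?_⟩
    rw [zero_smul]
    exact ((congrArg (residue A) (hM s hs i (Finset.notMem_empty i))).trans
      (map_zero (residue A))).symm
  · refine ⟨residue A (s j), funext fun i => ?_⟩
    rw [Pi.smul_apply, hval, smul_ite, smul_zero, smul_eq_mul, mul_one]
    split_ifs with hi
    · exact hconst s hs j hj i hi
    · exact ((congrArg (residue A) (hM s hs i hi)).trans (map_zero (residue A))).symm

variable [LinearOrder K] [IsStrictOrderedRing K]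

lemma valuation_le_of_abs_le (hA : (A : Set K).OrdConnected) {x y : K} (h : |x| ≤ |y|) :
    A.valuation x ≤ A.valuation y := by
  rcases eq_or_ne y 0 with rfl | hy
  · rw [abs_zero, abs_nonpos_iff] at h
    rw [h]
  have hxy : |x / y| ≤ 1 := by
    rw [abs_div]
    exact div_le_one_of_le₀ h (abs_nonneg y)
  have hmem : x / y ∈ A := hA.out (A.neg_mem _ A.one_mem) A.one_mem (abs_le.1 hxy)
  rwa [← A.valuation_le_one_iff, map_div₀, div_le_one₀ ((Valuation.pos_iff _).2 hy)] at hmem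

/-- The oscillation of a multiplier that is not constant modulo the maximal ideal is a unit, because
the valuation ring is order-convex; dividing by it normalizes the range to `[0, 1]`. -/
lemma exists_multiplier_onto_unitInterval (hA : (A : Set K).OrdConnected)
    (hM : ∀ s ∈ M, ∀ i ∉ S, s i = 0) (hone : Set.indicator S 1 ∈ M)
    (hrank : 1 < Module.finrank (ResidueField A) (M.map (coordResidue A ι))) :
    ∃ s ∈ M, (∀ i, 0 ≤ (s i : K) ∧ (s i : K) ≤ 1) ∧ (∃ i ∈ S, s i = 0) ∧ ∃ i ∈ S, s i = 1 := by
  obtain ⟨s, hs, i, hi, j, hj, hij⟩ := exists_residue_ne_of_one_lt_finrank hM hrank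
  obtain ⟨p, hp, hmax⟩ := S.exists_max_image (fun i => (s i : K)) ⟨i, hi⟩
  obtain ⟨q, hq, hmin⟩ := S.exists_min_image (fun i => (s i : K)) ⟨i, hi⟩
  obtain ⟨c, hc⟩ : IsUnit (s p - s q) := by
    by_contra hnonunit
    refine hij (sub_eq_zero.1 ?_)
    rw [← map_sub, residue_eq_zero_iff, A.valuation_lt_one_iff]
    refine (valuation_le_of_abs_le hA ?_).trans_lt
      ((A.valuation_lt_one_iff _).1 ((mem_maximalIdeal _).2 hnonunit))
    push_cast
    exact (abs_le.2 ⟨by linarith [hmin i hi, hmax j hj], by linarith [hmax i hi, hmin j hj]⟩).trans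
      (le_abs_self _)
  have hcK : ((c : A) : K) = s p - s q := congrArg Subtype.val hc
  have hinv : ((↑c⁻¹ : A) : K) * (s p - s q) = 1 := by
    rw [← hcK]
    exact congrArg Subtype.val c.inv_mul
  have hpos : 0 < (s p : K) - s q :=
    (sub_nonneg.2 (hmin p hp)).lt_of_ne' (right_ne_zero_of_mul_eq_one hinv)
  have hinvpos : 0 < ((↑c⁻¹ : A) : K) := pos_of_mul_pos_left (hinv ▸ one_pos) hpos.le
  let s' : ι → A := (↑c⁻¹ : A) • (s - s q • Set.indicator S 1)
  have hs' : s' ∈ M := M.smul_mem _ (M.sub_mem hs (M.smul_mem _ hone))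
  have hval {i} (hi : i ∈ S) : (s' i : K) = (↑c⁻¹ : A) * (s i - s q) := by
    simp [s', hi]
  refine ⟨s', hs', fun i => ?_, ⟨q, hq, ?_⟩, ⟨p, hp, ?_⟩⟩
  · by_cases hi : i ∈ S
    · rw [hval hi, ← hinv]
      exact ⟨mul_nonneg hinvpos.le (sub_nonneg.2 (hmin i hi)),
        mul_le_mul_of_nonneg_left (sub_le_sub_right (hmax i hi) _) hinvpos.le⟩
    · rw [hM s' hs' i hi]
      exact ⟨le_rfl, zero_le_one⟩
  · exact Subtype.ext (by rw [hval hq, sub_self, mul_zero]; rfl)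
  · exact Subtype.ext ((hval hp).trans hinv)

end Normalize

section BalancedWeights

variable {K ι V : Type*} [Fintype ι] [Field K] [AddCommGroup V] [Module K V]
  {A : ValuationSubring K}

/-- The weights `t` for which the stress `t • lam` has total `0` and transmits an element of the
lattice `W ν` into the second cluster of each split `ν` of `τ`. -/
def balancedWeights (lam : ι → V) (W : ClusterTree ι × ClusterTree ι → Submodule A V)
    (τ : ClusterTree ι) : AddSubgroup (ι → K) where
  carrier := {t | (∀ ν ∈ τ.splits, ∑ i ∈ ν.2.leaves, t i • lam i ∈ W ν) ∧ ∑ i, t i • lam i = 0}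
  zero_mem' := by
    simp only [Set.mem_ofPred_eq, Pi.zero_apply, zero_smul, Finset.sum_const_zero,
      Submodule.zero_mem, implies_true, and_self]
  add_mem' := by
    rintro s t ⟨hs, hs0⟩ ⟨ht, ht0⟩
    simp only [Set.mem_ofPred_eq, Pi.add_apply, add_smul, Finset.sum_add_distrib, hs0, ht0,
      add_zero, and_true]
    exact fun ν hν => (W ν).add_mem (hs ν hν) (ht ν hν)
  neg_mem' := by
    rintro s ⟨hs, hs0⟩
    simp only [Set.mem_ofPred_eq, Pi.neg_apply, neg_smul, Finset.sum_neg_distrib, hs0, neg_zero,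
      and_true]
    exact fun ν hν => (W ν).neg_mem (hs ν hν)

variable {lam : ι → V} {W : ClusterTree ι × ClusterTree ι → Submodule A V} {τ : ClusterTree ι}

lemma mul_mem_balancedWeights {S : Finset ι} {t : ι → K} {s : ι → A}
    (hs : s ∈ balanced (fun i => t i • lam i) W S τ ⊥) :
    (fun i => (s i : K) * t i) ∈ balancedWeights lam W τ := by
  have hsum (T : Finset ι) :
      ∑ i ∈ T, ((s i : K) * t i) • lam i = ∑ i ∈ T, s i • t i • lam i :=
    Finset.sum_congr rfl fun i _ => mul_smul _ _ _
  exact ⟨fun ν hν => hsum _ ▸ hs.2.1 ν hν, (hsum _).trans hs.2.2⟩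

lemma indicator_support_mem_balanced (hleaves : τ.leaves = Finset.univ) {t : ι → K}
    (ht : t ∈ balancedWeights lam W τ) {S : Finset ι} (hS : ∀ i, i ∈ S ↔ t i ≠ 0) :
    Set.indicator S 1 ∈ balanced (fun i => t i • lam i) W S τ ⊥ := by
  have hmul (i) : Set.indicator S (1 : ι → A) i • t i • lam i = t i • lam i := by
    by_cases hi : i ∈ S
    · rw [Set.indicator_of_mem (Finset.mem_coe.2 hi), Pi.one_apply, one_smul]
    · rw [not_not.1 (mt (hS i).2 hi), zero_smul, smul_zero]
  refine ⟨fun i hi => Set.indicator_of_notMem (by rwa [hleaves, Finset.inter_univ] at hi) _, ?_, ?_⟩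
  · simpa only [hmul] using ht.1
  · simpa only [hmul, Submodule.mem_bot] using ht.2

end BalancedWeights

/-! ### Sparse decompositions of balanced stresses -/

section Decompose

variable {K ι : Type*} [Fintype ι] [Field K] [LinearOrder K]

/-- `p` writes the weight `t` as a sum of nonnegative weights `p B`, indexed by the sets `B` of at
most `k` points, with `p B` supported on `B`. -/
structure IsSparseDecomposition (k : ℕ) (t : ι → K) (p : Finset ι → ι → K) : Prop where
  nonneg : ∀ B, 0 ≤ p B
  eq_zero_of_notMem : ∀ B, ∀ i ∉ B, p B i = 0
  eq_zero_of_lt_card : ∀ B, k < B.card → p B = 0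
  sum_eq : ∑ B, p B = t

lemma isSparseDecomposition_single {k : ℕ} {t : ι → K} (ht : 0 ≤ t) {B : Finset ι}
    (hB : ∀ i ∉ B, t i = 0) (hk : B.card ≤ k) :
    IsSparseDecomposition k t (Pi.single B t) where
  nonneg B' := by
    rw [Pi.single_apply]
    split_ifs
    exacts [ht, le_rfl]
  eq_zero_of_notMem B' i hi := by
    rcases eq_or_ne B' B with rfl | h
    · rw [Pi.single_eq_same, hB i hi]
    · rw [Pi.single_eq_of_ne h, Pi.zero_apply]
  eq_zero_of_lt_card B' hB' := Pi.single_eq_of_ne (by rintro rfl; exact hB'.not_ge hk) _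
  sum_eq := Fintype.sum_pi_single' B t

variable [IsStrictOrderedRing K]

lemma IsSparseDecomposition.add {k : ℕ} {t t' : ι → K} {p p' : Finset ι → ι → K}
    (h : IsSparseDecomposition k t p) (h' : IsSparseDecomposition k t' p') :
    IsSparseDecomposition k (t + t') (p + p') where
  nonneg B := add_nonneg (h.nonneg B) (h'.nonneg B)
  eq_zero_of_notMem B i hi := by
    rw [Pi.add_apply, Pi.add_apply, h.eq_zero_of_notMem B i hi, h'.eq_zero_of_notMem B i hi,
      add_zero]
  eq_zero_of_lt_card B hB := by
    rw [Pi.add_apply, h.eq_zero_of_lt_card B hB, h'.eq_zero_of_lt_card B hB, add_zero]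
  sum_eq := by simp only [Pi.add_apply, Finset.sum_add_distrib, h.sum_eq, h'.sum_eq]

lemma exists_isSparseDecomposition_of_split (M : AddSubgroup (ι → K)) (k : ℕ)
    (hsplit : ∀ t ∈ M, 0 ≤ t → k < (Finset.univ.filter (t · ≠ 0)).card →
      ∃ r ∈ M, 0 ≤ r ∧ r ≤ t ∧ (∃ i, t i ≠ 0 ∧ r i = 0) ∧ ∃ i, t i ≠ 0 ∧ r i = t i)
    {t : ι → K} (ht : t ∈ M) (ht0 : 0 ≤ t) :
    ∃ p, IsSparseDecomposition k t p ∧ ∀ B, p B ∈ M := by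
  induction hcard : (Finset.univ.filter (t · ≠ 0)).card using Nat.strong_induction_on
    generalizing t with
  | _ c ih =>
  rcases le_or_gt (Finset.univ.filter (t · ≠ 0)).card k with hk | hk
  · refine ⟨_, isSparseDecomposition_single ht0 (fun i hi => ?_) hk, fun B => ?_⟩
    · simpa only [Finset.mem_filter, Finset.mem_univ, true_and, not_not] using hi
    · rw [Pi.single_apply]
      split_ifs
      exacts [ht, M.zero_mem]
  have ihlt (r : ι → K) (hrM : r ∈ M) (hr0 : 0 ≤ r) (hrt : r ≤ t) {i : ι} (hti : t i ≠ 0)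
      (hri : r i = 0) : ∃ p, IsSparseDecomposition k r p ∧ ∀ B, p B ∈ M := by
    refine ih _ (hcard ▸ Finset.card_lt_card ?_) hrM hr0 rfl
    refine (Finset.ssubset_iff_of_subset fun j => ?_).2 ⟨i, by simpa using hti, by simpa using hri⟩
    simp only [Finset.mem_filter, Finset.mem_univ, true_and]
    exact fun hj hj' => hj (le_antisymm (hj' ▸ hrt j) (hr0 j))
  obtain ⟨r, hrM, hr0, hrt, ⟨i, hti, hri⟩, j, htj, hrj⟩ := hsplit t ht ht0 hk
  obtain ⟨p, hp, hpM⟩ := ihlt r hrM hr0 hrt hti hri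
  obtain ⟨p', hp', hpM'⟩ := ihlt (t - r) (M.sub_mem ht hrM) (sub_nonneg.2 hrt)
    (sub_le_self t hr0) htj (by rw [Pi.sub_apply, hrj, sub_self])
  exact ⟨p + p', add_sub_cancel r t ▸ hp.add hp', fun B => M.add_mem (hpM B) (hpM' B)⟩

variable {V : Type*} [AddCommGroup V] [Module K V] [FiniteDimensional K V]
  {A : ValuationSubring K} {lam : ι → V}
  {W : ClusterTree ι × ClusterTree ι → Submodule A V} {τ : ClusterTree ι}

/-- More than `2 ^ dim V` points in the support force, by `residueCount_balanced`, a multiplier of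
the stress that is not constant modulo the maximal ideal. -/
lemma exists_split_of_mem_balancedWeights (hA : (A : Set K).OrdConnected) (hτ : τ.Nodup)
    (hleaves : τ.leaves = Finset.univ) (hW : ∀ ν ∈ τ.splits, ∀ κ ∈ subsplits ν, W ν ≤ W κ)
    {t : ι → K} (ht : t ∈ balancedWeights lam W τ) (ht0 : 0 ≤ t)
    (hcard : 2 ^ Module.finrank K V < (Finset.univ.filter (t · ≠ 0)).card) :
    ∃ r ∈ balancedWeights lam W τ, 0 ≤ r ∧ r ≤ t ∧ (∃ i, t i ≠ 0 ∧ r i = 0) ∧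
      ∃ i, t i ≠ 0 ∧ r i = t i := by
  set S := Finset.univ.filter (t · ≠ 0)
  have hS (i) : i ∈ S ↔ t i ≠ 0 := by simp [S]
  have hinter : S ∩ τ.leaves = S := by rw [hleaves, Finset.inter_univ]
  have hone : Set.indicator S 1 ∈ balanced (fun i => t i • lam i) W S τ ⊥ :=
    indicator_support_mem_balanced hleaves ht hS
  obtain ⟨Y, -, hY⟩ := residueCount_balanced hτ (fun _ _ => bot_le) hW
    (by rwa [hinter])
  rw [hinter] at hY
  have hrank : 1 < Module.finrank (ResidueField A)
      ((balanced (fun i => t i • lam i) W S τ ⊥).map (coordResidue A ι)) := by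
    by_contra! hle
    refine hcard.not_ge (hY.trans ?_)
    calc _ ≤ 1 * 2 ^ Module.finrank K V := by
          gcongr
          exacts [one_le_two, Submodule.finrank_le Y]
      _ = _ := one_mul _
  obtain ⟨s, hs, hs01, ⟨i, hi, hsi⟩, j, hj, hsj⟩ := exists_multiplier_onto_unitInterval
    (M := balanced (fun i => t i • lam i) W S τ ⊥) hA
    (fun s hs i hi => hs.1 i (by rwa [hinter])) hone hrank
  exact ⟨fun i => s i * t i, mul_mem_balancedWeights hs,
    fun k => mul_nonneg (hs01 k).1 (ht0 k), fun k => mul_le_of_le_one_left (ht0 k) (hs01 k).2,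
    ⟨i, (hS i).1 hi, by simp [hsi]⟩, j, (hS j).1 hj, by simp [hsj]⟩

theorem exists_isSparseDecomposition (hA : (A : Set K).OrdConnected) (hτ : τ.Nodup)
    (hleaves : τ.leaves = Finset.univ) (hW : ∀ ν ∈ τ.splits, ∀ κ ∈ subsplits ν, W ν ≤ W κ)
    {t : ι → K} (ht : t ∈ balancedWeights lam W τ) (ht0 : 0 ≤ t) :
    ∃ p, IsSparseDecomposition (2 ^ Module.finrank K V) t p ∧
      ∀ B, p B ∈ balancedWeights lam W τ :=
  exists_isSparseDecomposition_of_split _ _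
    (fun _ ht ht0 hcard => exists_split_of_mem_balancedWeights hA hτ hleaves hW ht ht0 hcard) ht ht0

end Decompose

open Filter
open scoped Matrix

section Lattice

variable {K I J : Type*} [Field K] [Fintype J]

/-- The lattice of vectors mapped by the matrix `b` to vectors with entries in `A`. -/
def integralPreimage (A : ValuationSubring K) (b : Matrix I J K) : Submodule A (J → K) where
  carrier := {v | ∀ i, (b *ᵥ v) i ∈ A}
  zero_mem' i := by
    rw [Matrix.mulVec_zero]
    exact A.zero_mem
  add_mem' {v w} hv hw i := by
    rw [Matrix.mulVec_add]
    exact A.add_mem _ _ (hv i) (hw i)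
  smul_mem' c v hv i := by
    have hc : b *ᵥ (c • v) = (c : K) • (b *ᵥ v) := Matrix.mulVec_smul b (c : K) v
    rw [hc]
    exact A.mul_mem _ _ c.2 (hv i)

end Lattice

/-! ### Passage to the hyperreals -/

section Hyperreal

/-- The valuation ring of hyperreals bounded by a real number. -/
def boundedHyperreals : ValuationSubring ℝ* :=
  (ArchimedeanClass.addValuation ℝ*).toValuation.valuationSubring

lemma mem_boundedHyperreals {x : ℝ*} : x ∈ boundedHyperreals ↔ ∃ c : ℝ, |x| ≤ c := by
  have hmk : x ∈ boundedHyperreals ↔ 0 ≤ ArchimedeanClass.mk x := Iff.rfl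
  rw [hmk]
  constructor
  · rw [← ArchimedeanClass.mk_one, ArchimedeanClass.mk_le_mk]
    rintro ⟨n, hn⟩
    refine ⟨n, hn.trans_eq ?_⟩
    rw [abs_one, nsmul_one]
    exact (map_natCast Hyperreal.coeRingHom n).symm
  · rintro ⟨c, hc⟩
    exact (Hyperreal.archimedeanClassMk_coe_nonneg c).trans
      (ArchimedeanClass.mk_le_mk.2 ⟨1, by simpa only [one_smul] using hc.trans (le_abs_self _)⟩)

lemma ordConnected_boundedHyperreals : (boundedHyperreals : Set ℝ*).OrdConnected := by
  refine ⟨fun x hx y hy z hz => ?_⟩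
  obtain ⟨c, hc⟩ := mem_boundedHyperreals.1 hx
  obtain ⟨d, hd⟩ := mem_boundedHyperreals.1 hy
  refine mem_boundedHyperreals.2 ⟨max c d, (abs_le_max_abs_abs hz.1 hz.2).trans ?_⟩
  rw [Hyperreal.coe_max]
  exact max_le_max hc hd

variable {I J : Type*}

/-- The hyperreal vector represented by a sequence of real vectors. -/
def ofSeqVec : (ℕ → J → ℝ) →+* (J → ℝ*) :=
  RingHom.pi fun a => (Germ.coeRingHom (hyperfilter ℕ : Filter ℕ)).comp
    (RingHom.pi fun k => (Pi.evalRingHom (fun _ : J => ℝ) a).comp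
      (Pi.evalRingHom (fun _ : ℕ => J → ℝ) k))

lemma ofSeqVec_apply (f : ℕ → J → ℝ) (a : J) : ofSeqVec f a = Hyperreal.ofSeq (f · a) := rfl

lemma ofSeqVec_surjective : Function.Surjective (ofSeqVec (J := J)) := fun v => by
  choose f hf using fun a => Hyperreal.ofSeq_surjective (v a)
  exact ⟨fun k a => f a k, funext hf⟩

lemma ofSeqVec_le_iff [Finite J] {f g : ℕ → J → ℝ} :
    ofSeqVec f ≤ ofSeqVec g ↔ ∀ᶠ k in hyperfilter ℕ, f k ≤ g k := by
  simp only [Pi.le_def, ofSeqVec_apply, Hyperreal.ofSeq_le_ofSeq, eventually_all]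

lemma ofSeqVec_eq_iff [Finite J] {f g : ℕ → J → ℝ} :
    ofSeqVec f = ofSeqVec g ↔ ∀ᶠ k in hyperfilter ℕ, f k = g k := by
  simp only [le_antisymm_iff, ofSeqVec_le_iff, eventually_and]

variable [Fintype J]

lemma ofSeqVec_mem_boundedHyperreals_iff {f : ℕ → J → ℝ} :
    (∀ a, ofSeqVec f a ∈ boundedHyperreals) ↔
      ∀ᶠ c : ℝ in atTop, ∀ᶠ k in hyperfilter ℕ, ‖f k‖ ≤ c := by
  have habs (a) (c : ℝ) : |ofSeqVec f a| ≤ c ↔ ∀ᶠ k in hyperfilter ℕ, |f k a| ≤ c := by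
    rw [ofSeqVec_apply, abs_le']
    exact (and_congr Hyperreal.ofSeq_le_ofSeq Hyperreal.ofSeq_le_ofSeq).trans
      (eventually_and.symm.trans (eventually_congr (.of_forall fun k => abs_le'.symm)))
  simp only [mem_boundedHyperreals, habs]
  constructor
  · intro h
    choose c hc using h
    have hge := eventually_all.2 fun a => eventually_ge_atTop (c a)
    filter_upwards [hge, eventually_ge_atTop 0] with d hd hd0
    filter_upwards [eventually_all.2 hc] with k hk
    exact (pi_norm_le_iff_of_nonneg hd0).2 fun a => (hk a).trans (hd a)
  · intro h a
    obtain ⟨c, hc⟩ := h.exists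
    exact ⟨c, hc.mono fun k hk => (norm_le_pi_norm (f k) a).trans hk⟩

lemma of_ofSeq_mulVec_ofSeqVec (b : ℕ → Matrix I J ℝ) (f : ℕ → J → ℝ) :
    Matrix.of (fun i => ofSeqVec (b · i)) *ᵥ ofSeqVec f = ofSeqVec fun k => b k *ᵥ f k := by
  funext i
  have hsum : (∑ j, fun k => b k i j * f k j) = fun k => (b k *ᵥ f k) i :=
    funext fun k => Finset.sum_apply k _ _
  refine Eq.trans ?_ (congrArg (Germ.coeRingHom (hyperfilter ℕ : Filter ℕ)) hsum)
  rw [map_sum]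
  rfl

lemma ofSeqVec_mem_integralPreimage_iff [Fintype I] {b : ℕ → Matrix I J ℝ} {f : ℕ → J → ℝ} :
    ofSeqVec f ∈ integralPreimage boundedHyperreals (Matrix.of fun i => ofSeqVec (b · i)) ↔
      ∀ᶠ c : ℝ in atTop, ∀ᶠ k in hyperfilter ℕ, ‖b k *ᵥ f k‖ ≤ c := by
  rw [← ofSeqVec_mem_boundedHyperreals_iff, ← of_ofSeq_mulVec_ofSeqVec]
  rfl

end Hyperreal

section Transfer

variable {ι I J : Type*} [Fintype I] [Fintype J]

lemma integralPreimage_ofSeqVec_mono {b b' : ℕ → Matrix I J ℝ} {L : ℝ}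
    (h : ∀ k v, ‖b' k *ᵥ v‖ ≤ L * ‖b k *ᵥ v‖) :
    integralPreimage boundedHyperreals (Matrix.of fun i => ofSeqVec (b · i)) ≤
      integralPreimage boundedHyperreals (Matrix.of fun i => ofSeqVec (b' · i)) := by
  intro v hv
  obtain ⟨f, rfl⟩ := ofSeqVec_surjective v
  rw [ofSeqVec_mem_integralPreimage_iff] at hv ⊢
  obtain ⟨c, hc⟩ := hv.exists
  filter_upwards [eventually_ge_atTop (|L| * c)] with d hd
  filter_upwards [hc] with k hk
  calc ‖b' k *ᵥ f k‖ ≤ L * ‖b k *ᵥ f k‖ := h k _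
    _ ≤ |L| * c := by gcongr; exact le_abs_self L
    _ ≤ d := hd

/-- The weights `t` for which the stress `t • lam` has total `0` and, for each split `ν` of `τ`,
the stress transmitted into the second cluster has size at most `c`, as measured by `b ν`. -/
def BalancedWithin [Fintype ι] (c : ℝ) (b : ClusterTree ι × ClusterTree ι → Matrix I J ℝ)
    (lam : ι → J → ℝ) (τ : ClusterTree ι) (t : ι → ℝ) : Prop :=
  (∀ ν ∈ τ.splits, ‖b ν *ᵥ ∑ i ∈ ν.2.leaves, t i • lam i‖ ≤ c) ∧ ∑ i, t i • lam i = 0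

variable [Fintype ι] {τ : ClusterTree ι}

lemma IsSparseDecomposition.eventually {d : ℕ} {t : ℕ → ι → ℝ} {p : Finset ι → ℕ → ι → ℝ}
    (h : IsSparseDecomposition d (ofSeqVec t) fun B => ofSeqVec (p B)) :
    ∀ᶠ k in hyperfilter ℕ, IsSparseDecomposition d (t k) fun B => p B k := by
  have hnonneg (B) : ∀ᶠ k in hyperfilter ℕ, 0 ≤ p B k :=
    ofSeqVec_le_iff.1 ((map_zero ofSeqVec).trans_le (h.nonneg B))
  have hsupp (B) (i) (hi : i ∉ B) : ∀ᶠ k in hyperfilter ℕ, p B k i = 0 :=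
    Germ.coe_eq.1 (h.eq_zero_of_notMem B i hi)
  have hcard (B : Finset ι) (hB : d < B.card) : ∀ᶠ k in hyperfilter ℕ, p B k = 0 :=
    ofSeqVec_eq_iff.1 ((h.eq_zero_of_lt_card B hB).trans (map_zero ofSeqVec).symm)
  have hsum : ∀ᶠ k in hyperfilter ℕ, (∑ B, p B) k = t k :=
    ofSeqVec_eq_iff.1 ((map_sum ofSeqVec _ _).trans h.sum_eq)
  filter_upwards [eventually_all.2 hnonneg,
    eventually_all.2 fun B => eventually_all.2 fun i => eventually_all.2 (hsupp B i),
    eventually_all.2 fun B => eventually_all.2 (hcard B), hsum] with k h₁ h₂ h₃ h₄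
  exact ⟨h₁, h₂, h₃, (Finset.sum_apply k _ _).symm.trans h₄⟩

lemma ofSeqVec_mem_balancedWeights_iff {b : ℕ → ClusterTree ι × ClusterTree ι → Matrix I J ℝ}
    {lam : ℕ → ι → J → ℝ} {t : ℕ → ι → ℝ} :
    ofSeqVec t ∈ balancedWeights (fun i => ofSeqVec (lam · i))
        (fun ν => integralPreimage boundedHyperreals (Matrix.of fun i => ofSeqVec (b · ν i))) τ ↔
      ∀ᶠ c : ℝ in atTop, ∀ᶠ k in hyperfilter ℕ, BalancedWithin c (b k) (lam k) τ (t k) := by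
  have hstress (T : Finset ι) : ∑ i ∈ T, ofSeqVec t i • ofSeqVec (lam · i) =
      ofSeqVec fun k => ∑ i ∈ T, t k i • lam k i := by
    have hsum : (∑ i ∈ T, fun k => t k i • lam k i) = fun k => ∑ i ∈ T, t k i • lam k i :=
      funext fun k => Finset.sum_apply k _ _
    rw [← hsum, map_sum]
    rfl
  have hzero (f : ℕ → J → ℝ) : ofSeqVec f = 0 ↔ ∀ᶠ k in hyperfilter ℕ, f k = 0 :=
    (map_zero (ofSeqVec (J := J))).symm ▸ ofSeqVec_eq_iff (g := 0)
  have hsplits := τ.splits.finite_toSet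
  change (∀ ν ∈ τ.splits, _ ∈ integralPreimage _ _) ∧ _ = 0 ↔ _
  simp only [hstress, ofSeqVec_mem_integralPreimage_iff, hzero, BalancedWithin, eventually_and,
    eventually_const]
  exact and_congr_left fun _ => (eventually_all_finite hsplits).symm.trans
    (eventually_congr (.of_forall fun c => (eventually_all_finite hsplits).symm))

/-- By compactness: a sequence of counterexamples would give one over the hyperreals, where
`exists_isSparseDecomposition` applies to the valuation ring of bounded elements. -/
theorem exists_uniform_balancedWithin (I J : Type*) [Fintype I] [Fintype J] (hτ : τ.Nodup)
    (hleaves : τ.leaves = Finset.univ) (L : ℝ) :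
    ∃ C : ℝ, ∀ (b : ClusterTree ι × ClusterTree ι → Matrix I J ℝ) (lam : ι → J → ℝ),
      (∀ ν ∈ τ.splits, ∀ κ ∈ subsplits ν, ∀ v, ‖b κ *ᵥ v‖ ≤ L * ‖b ν *ᵥ v‖) →
      BalancedWithin 1 b lam τ 1 → ∃ p, IsSparseDecomposition (2 ^ Fintype.card J) 1 p ∧
        ∀ B, BalancedWithin C b lam τ (p B) := by
  by_contra! hcon
  choose b lam hnest hbal hno using fun k : ℕ => hcon k
  have hone : ofSeqVec 1 ∈ balancedWeights (fun i => ofSeqVec (lam · i))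
      (fun ν => integralPreimage boundedHyperreals (Matrix.of fun i => ofSeqVec (b · ν i))) τ :=
    ofSeqVec_mem_balancedWeights_iff.2 <| (eventually_ge_atTop 1).mono fun c hc =>
      .of_forall fun k => ⟨fun ν hν => ((hbal k).1 ν hν).trans hc, (hbal k).2⟩
  obtain ⟨p, hp, hpmem⟩ := exists_isSparseDecomposition ordConnected_boundedHyperreals hτ hleaves
    (fun ν hν κ hκ => integralPreimage_ofSeqVec_mono fun k => hnest k ν hν κ hκ) hone
    (map_one ofSeqVec ▸ zero_le_one)
  choose q hq using fun B => ofSeqVec_surjective (p B)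
  obtain rfl : (fun B => ofSeqVec (q B)) = p := funext hq
  rw [Module.finrank_fintype_fun_eq_card] at hp
  obtain ⟨c, hc⟩ := (eventually_all.2 fun B => ofSeqVec_mem_balancedWeights_iff.1 (hpmem B)).exists
  have hlarge : ∀ᶠ k : ℕ in hyperfilter ℕ, c ≤ k :=
    Nat.hyperfilter_le_atTop (tendsto_natCast_atTop_atTop.eventually_ge_atTop c)
  obtain ⟨k, hk, hkc, hck⟩ := (hp.eventually.and ((eventually_all.2 hc).and hlarge)).exists
  obtain ⟨B, hB⟩ := hno k _ hk
  exact hB ⟨fun ν hν => ((hkc B).1 ν hν).trans hck, (hkc B).2⟩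

end Transfer

section DualMatrix

variable {J : Type*} [Fintype J]

/-- The matrix of the transpose of `e⁻¹`; it turns the size of a linear form relative to the norm
`‖e v‖` into its size relative to the standard basis. -/
def dualMatrix (e : (J → ℝ) ≃ₗ[ℝ] (J → ℝ)) : Matrix J J ℝ :=
  (LinearMap.toMatrix' e.symm.toLinearMap)ᵀ

lemma dualMatrix_mulVec_dotProduct (e : (J → ℝ) ≃ₗ[ℝ] (J → ℝ)) (φ v : J → ℝ) :
    (dualMatrix e *ᵥ φ) ⬝ᵥ e v = φ ⬝ᵥ v := by
  rw [dualMatrix, Matrix.mulVec_transpose, ← Matrix.dotProduct_mulVec, LinearMap.toMatrix'_mulVec,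
    LinearEquiv.coe_coe, e.symm_apply_apply]

lemma dualMatrix_mulVec_apply (e : (J → ℝ) ≃ₗ[ℝ] (J → ℝ)) (φ : J → ℝ) (j : J) :
    (dualMatrix e *ᵥ φ) j = φ ⬝ᵥ e.symm (Pi.single j 1) := by
  rw [← dualMatrix_mulVec_dotProduct e, e.apply_symm_apply, dotProduct_single_one]

lemma abs_dotProduct_le (φ v : J → ℝ) : |φ ⬝ᵥ v| ≤ Fintype.card J * (‖φ‖ * ‖v‖) := by
  refine (Finset.abs_sum_le_sum_abs _ _).trans ?_
  rw [← nsmul_eq_mul, ← Finset.card_univ]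
  refine Finset.sum_le_card_nsmul _ _ _ fun i _ => ?_
  rw [abs_mul]
  exact mul_le_mul (norm_le_pi_norm φ i) (norm_le_pi_norm v i) (abs_nonneg _) (norm_nonneg _)

lemma abs_dotProduct_le_dualMatrix (e : (J → ℝ) ≃ₗ[ℝ] (J → ℝ)) (φ v : J → ℝ) :
    |φ ⬝ᵥ v| ≤ Fintype.card J * (‖dualMatrix e *ᵥ φ‖ * ‖e v‖) := by
  rw [← dualMatrix_mulVec_dotProduct e]
  exact abs_dotProduct_le _ _

lemma norm_dualMatrix_mulVec_le {e e' : (J → ℝ) ≃ₗ[ℝ] (J → ℝ)} {L : ℝ} (hL : 0 ≤ L)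
    (h : ∀ v, ‖e v‖ ≤ L * ‖e' v‖) (φ : J → ℝ) :
    ‖dualMatrix e' *ᵥ φ‖ ≤ Fintype.card J * L * ‖dualMatrix e *ᵥ φ‖ := by
  refine (pi_norm_le_iff_of_nonneg (by positivity)).2 fun j => ?_
  have hj : ‖e (e'.symm (Pi.single j 1))‖ ≤ L := by
    simpa only [e'.apply_symm_apply, Pi.norm_single, norm_one, mul_one] using
      h (e'.symm (Pi.single j 1))
  rw [dualMatrix_mulVec_apply, Real.norm_eq_abs]
  calc _ ≤ Fintype.card J * (‖dualMatrix e *ᵥ φ‖ * ‖e (e'.symm (Pi.single j 1))‖) :=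
        abs_dotProduct_le_dualMatrix e _ _
    _ ≤ Fintype.card J * (‖dualMatrix e *ᵥ φ‖ * L) := by gcongr
    _ = Fintype.card J * L * ‖dualMatrix e *ᵥ φ‖ := by ring

lemma eq_zero_of_forall_dotProduct_lt {φ : J → ℝ} {c : ℝ} (h : ∀ v, φ ⬝ᵥ v < c) : φ = 0 := by
  by_contra hne
  have hpos : φ ⬝ᵥ φ ≠ 0 := mt dotProduct_self_eq_zero.1 hne
  have := h ((c / (φ ⬝ᵥ φ)) • φ)
  rw [dotProduct_smul, smul_eq_mul, div_mul_cancel₀ _ hpos] at this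
  exact this.false

end DualMatrix

/-! ### Selection by duality -/

section Pairing

variable {ι J : Type*} [Fintype J]

lemma sum_dotProduct_eq_sub_splits {τ : ClusterTree ι} (hτ : τ.Nodup) (mu P : ι → J → ℝ) :
    ∑ x ∈ τ.leaves, mu x ⬝ᵥ P x = (∑ x ∈ τ.leaves, mu x) ⬝ᵥ P τ.base -
      (τ.splits.map fun ν => (∑ x ∈ ν.2.leaves, mu x) ⬝ᵥ (P ν.1.base - P ν.2.base)).sum := by
  induction τ with
  | leaf i => simp only [leaves, splits, base, Finset.sum_singleton, List.map_nil, List.sum_nil,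
      sub_zero]
  | node l r ihl ihr =>
    obtain ⟨hd, hl, hr⟩ := nodup_node.1 hτ
    simp only [leaves, splits, base, Finset.sum_union hd, ihl hl, ihr hr, List.map_cons,
      List.sum_cons, List.map_append, List.sum_append, add_dotProduct, dotProduct_sub]
    ring

/-- The functions on the leaves of `τ` whose jump across each split `ν` has size less than `c`, as
measured by `e ν`; written as an intersection of half-spaces so that convexity and openness are
immediate. -/
def strictlyCompatible (c : ℝ) (e : ClusterTree ι × ClusterTree ι → (J → ℝ) ≃ₗ[ℝ] (J → ℝ))
    (τ : ClusterTree ι) : Set (ι → J → ℝ) :=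
  ⋂ ν ∈ τ.splits, ((e ν).toLinearMap ∘ₗ ((LinearMap.proj ν.1.base : (ι → J → ℝ) →ₗ[ℝ] J → ℝ) -
    LinearMap.proj ν.2.base)) ⁻¹' Metric.ball 0 c

variable {e : ClusterTree ι × ClusterTree ι → (J → ℝ) ≃ₗ[ℝ] (J → ℝ)} {τ : ClusterTree ι}
  {c : ℝ} {P : ι → J → ℝ}

lemma mem_strictlyCompatible :
    P ∈ strictlyCompatible c e τ ↔ ∀ ν ∈ τ.splits, ‖e ν (P ν.1.base - P ν.2.base)‖ < c := by
  simp only [strictlyCompatible, Set.mem_iInter, Set.mem_preimage, mem_ball_zero_iff]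
  rfl

lemma const_mem_strictlyCompatible (hc : 0 < c) (v : J → ℝ) :
    (fun _ => v) ∈ strictlyCompatible c e τ :=
  mem_strictlyCompatible.2 fun ν _ => by rwa [sub_self, map_zero, norm_zero]

lemma indicator_mem_strictlyCompatible (hτ : τ.Nodup) (hc : 0 < c)
    {ν : ClusterTree ι × ClusterTree ι} (hν : ν ∈ τ.splits) {v : J → ℝ} (hv : ‖e ν v‖ < c) :
    Set.indicator ν.2.leaves (fun _ => v) ∈ strictlyCompatible c e τ := by
  refine mem_strictlyCompatible.2 fun κ hκ => ?_
  rcases eq_or_ne κ ν with rfl | hne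
  · rw [Set.indicator_of_notMem (Finset.disjoint_left.1 (hτ κ hν) κ.1.base_mem_leaves),
      Set.indicator_of_mem (Finset.mem_coe.2 κ.2.base_mem_leaves), zero_sub, map_neg, norm_neg]
    exact hv
  · have hiff := hτ.base_mem_right_iff hν hκ hne
    simp only [Set.indicator_apply, Finset.mem_coe, hiff, sub_self, map_zero, norm_zero, hc]

lemma convex_strictlyCompatible : Convex ℝ (strictlyCompatible c e τ) :=
  convex_iInter₂ fun _ _ => (convex_ball 0 c).linear_preimage _

lemma isOpen_strictlyCompatible [Finite ι] : IsOpen (strictlyCompatible c e τ) :=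
  τ.splits.finite_toSet.isOpen_biInter fun _ _ =>
    Metric.isOpen_ball.preimage (LinearMap.continuous_of_finiteDimensional _)

variable [Fintype ι]

lemma balancedWithin_of_forall_lt (hτ : τ.Nodup) (hc : 0 < c) {lam : ι → J → ℝ}
    (h : ∀ P ∈ strictlyCompatible c e τ, ∑ x, lam x ⬝ᵥ P x < c / 2) :
    BalancedWithin 1 (fun ν => dualMatrix (e ν)) lam τ 1 := by
  simp only [BalancedWithin, Pi.one_apply, one_smul]
  refine ⟨fun ν hν => (pi_norm_le_iff_of_nonneg zero_le_one).2 fun j => ?_, ?_⟩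
  · have hlt {v : J → ℝ} (hv : ‖e ν v‖ < c) : (∑ x ∈ ν.2.leaves, lam x) ⬝ᵥ v < c / 2 := by
      refine lt_of_eq_of_lt ?_ (h _ (indicator_mem_strictlyCompatible hτ hc hν hv))
      simp only [sum_dotProduct, Set.indicator_apply, Finset.mem_coe, apply_ite (dotProduct _),
        dotProduct_zero, Finset.sum_ite_mem, Finset.univ_inter]
    have hnorm : ‖e ν ((c / 2) • (e ν).symm (Pi.single j 1))‖ < c := by
      rw [map_smul, (e ν).apply_symm_apply, norm_smul, Pi.norm_single, norm_one, mul_one,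
        Real.norm_of_nonneg (half_pos hc).le]
      exact half_lt_self hc
    have hpos := hlt hnorm
    have hneg := hlt (v := -((c / 2) • (e ν).symm (Pi.single j 1))) (by rwa [map_neg, norm_neg])
    rw [dotProduct_neg, dotProduct_smul, smul_eq_mul] at hneg
    rw [dotProduct_smul, smul_eq_mul] at hpos
    rw [dualMatrix_mulVec_apply, Real.norm_eq_abs, abs_le]
    constructor <;> nlinarith
  · refine eq_zero_of_forall_dotProduct_lt (c := c / 2) fun v => ?_
    rw [sum_dotProduct]
    exact h _ (const_mem_strictlyCompatible hc v)

lemma abs_sum_dotProduct_le_of_balancedWithin (hτ : τ.Nodup) (hleaves : τ.leaves = Finset.univ)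
    {C c₀ : ℝ} {lam : ι → J → ℝ} {t : ι → ℝ}
    (ht : BalancedWithin C (fun ν => dualMatrix (e ν)) lam τ t)
    (hP : ∀ ν ∈ τ.splits, ‖e ν (P ν.1.base - P ν.2.base)‖ ≤ c₀) :
    |∑ x, (t x • lam x) ⬝ᵥ P x| ≤ τ.splits.length * (Fintype.card J * (C * c₀)) := by
  have hsum := sum_dotProduct_eq_sub_splits hτ (fun x => t x • lam x) P
  rw [hleaves, ht.2, zero_dotProduct, zero_sub] at hsum
  rw [hsum, abs_neg]
  have hterm (ν) (hν : ν ∈ τ.splits) :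
      |(∑ x ∈ ν.2.leaves, t x • lam x) ⬝ᵥ (P ν.1.base - P ν.2.base)| ≤
        Fintype.card J * (C * c₀) := by
    refine (abs_dotProduct_le_dualMatrix (e ν) _ _).trans ?_
    gcongr ?_ * ?_
    exact mul_le_mul (ht.1 ν hν) (hP ν hν) (norm_nonneg _) ((norm_nonneg _).trans (ht.1 ν hν))
  calc _ ≤ ((τ.splits.map _).map abs).sum := List.le_sum_of_subadditive abs abs_zero.le abs_add_le _
    _ ≤ _ • (Fintype.card J * (C * c₀)) := List.sum_le_card_nsmul _ _ <| by
      simpa only [List.map_map, List.forall_mem_map, Function.comp_apply] using hterm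
    _ = _ := by simp only [List.length_map, nsmul_eq_mul]

lemma exists_pairing (f : (ι → J → ℝ) →ₗ[ℝ] ℝ) :
    ∃ lam : ι → J → ℝ, ∀ P, f P = ∑ x, lam x ⬝ᵥ P x := by
  refine ⟨fun x => (dotProductEquiv ℝ J).symm (f ∘ₗ LinearMap.single ℝ (fun _ => J → ℝ) x),
    fun P => ?_⟩
  have hdot (φ : Module.Dual ℝ (J → ℝ)) (v : J → ℝ) : (dotProductEquiv ℝ J).symm φ ⬝ᵥ v = φ v :=
    LinearMap.congr_fun ((dotProductEquiv ℝ J).apply_symm_apply φ) v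
  simp only [hdot, LinearMap.comp_apply, LinearMap.single_apply, ← map_sum,
    Finset.univ_sum_single]

lemma exists_separating_stress (hc : 0 < c) {G : ι → Set (J → ℝ)} (hG : ∀ x, Convex ℝ (G x))
    (hdisj : Disjoint (strictlyCompatible c e τ) (Set.univ.pi G)) :
    ∃ lam : ι → J → ℝ, (∀ P ∈ strictlyCompatible c e τ, ∑ x, lam x ⬝ᵥ P x < c / 2) ∧
      ∀ P : ι → J → ℝ, (∀ x, P x ∈ G x) → c / 2 ≤ ∑ x, lam x ⬝ᵥ P x := by
  obtain ⟨f, u, hfu, huf⟩ := geometric_hahn_banach_open convex_strictlyCompatible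
    isOpen_strictlyCompatible (convex_pi fun x _ => hG x) hdisj
  have hu : 0 < u := by
    simpa only [map_zero] using hfu 0 (const_mem_strictlyCompatible hc 0)
  have hscale : 0 < c / 2 / u := div_pos (half_pos hc) hu
  obtain ⟨lam, hlam⟩ := exists_pairing ((c / 2 / u) • f.toLinearMap)
  refine ⟨lam, fun P hP => ?_, fun P hP => ?_⟩ <;>
    rw [← hlam, LinearMap.smul_apply, smul_eq_mul, ContinuousLinearMap.coe_coe]
  · calc _ < c / 2 / u * u := mul_lt_mul_of_pos_left (hfu P hP) hscale
      _ = c / 2 := div_mul_cancel₀ _ hu.ne'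
  · calc c / 2 = c / 2 / u * u := (div_mul_cancel₀ _ hu.ne').symm
      _ ≤ _ := mul_le_mul_of_nonneg_left (huf P fun x _ => hP x) hscale.le

lemma IsSparseDecomposition.sum_smul_mem {E : Type*} [AddCommGroup E] [Module ℝ E] {k : ℕ}
    {p : Finset ι → ι → ℝ} (hp : IsSparseDecomposition k 1 p) {G : ι → Set E}
    (hG : ∀ x, Convex ℝ (G x)) {Q : Finset ι → ι → E}
    (hQ : ∀ B : Finset ι, B.card ≤ k → ∀ x ∈ B, Q B x ∈ G x) (x : ι) :
    ∑ B, p B x • Q B x ∈ G x := by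
  have hzero (B : Finset ι) (hB : ¬(B.card ≤ k ∧ x ∈ B)) : p B x = 0 := by
    rcases not_and_or.1 hB with hB | hB
    · rw [hp.eq_zero_of_lt_card B (not_le.1 hB), Pi.zero_apply]
    · exact hp.eq_zero_of_notMem B x hB
  rw [← Finset.sum_filter_of_ne (p := fun B : Finset ι => B.card ≤ k ∧ x ∈ B) fun B _ hB =>
    not_not.1 fun h => hB (by rw [hzero B h, zero_smul])]
  refine (hG x).sum_mem (fun B _ => hp.nonneg B x) ?_ fun B hB => ?_
  · rw [Finset.sum_filter_of_ne fun B _ hB => not_not.1 fun h => hB (hzero B h)]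
    exact (Finset.sum_apply x _ _).symm.trans (congrFun hp.sum_eq x)
  · exact hQ B (Finset.mem_filter.1 hB).2.1 x (Finset.mem_filter.1 hB).2.2

/-- If no selection is compatible, a separating functional is a balanced stress; decomposing it into
sparse stresses and pairing these with the given partial selections contradicts the separation. -/
lemma exists_compatible_selection_pi (J : Type*) [Fintype J] (hτ : τ.Nodup)
    (hleaves : τ.leaves = Finset.univ) {L c₀ : ℝ} (hL : 0 ≤ L) :
    ∃ C : ℝ, ∀ e : ClusterTree ι × ClusterTree ι → (J → ℝ) ≃ₗ[ℝ] (J → ℝ),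
      (∀ ν ∈ τ.splits, ∀ κ ∈ subsplits ν, ∀ v, ‖e ν v‖ ≤ L * ‖e κ v‖) →
      ∀ G : ι → Set (J → ℝ), (∀ x, Convex ℝ (G x)) →
      (∀ B : Finset ι, B.card ≤ 2 ^ Fintype.card J →
        ∃ P : ι → J → ℝ, (∀ x ∈ B, P x ∈ G x) ∧
          ∀ ν ∈ τ.splits, ‖e ν (P ν.1.base - P ν.2.base)‖ ≤ c₀) →
      ∃ P : ι → J → ℝ, (∀ x, P x ∈ G x) ∧
        ∀ ν ∈ τ.splits, ‖e ν (P ν.1.base - P ν.2.base)‖ ≤ C := by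
  obtain ⟨C₀, hC₀⟩ := exists_uniform_balancedWithin J J hτ hleaves (Fintype.card J * L)
  set X : ℝ := ∑ _B : Finset ι, τ.splits.length * (Fintype.card J * (C₀ * c₀))
  refine ⟨2 * |X| + 2, fun e he G hG hsel => ?_⟩
  have hC : 0 < 2 * |X| + 2 := by positivity
  by_contra hcon
  obtain ⟨lam, hlam, hGlam⟩ := exists_separating_stress (e := e) (τ := τ) hC hG <| by
    refine Set.disjoint_left.2 fun P hP hPG => hcon ⟨P, fun x => hPG x trivial, fun ν hν => ?_⟩
    exact (mem_strictlyCompatible.1 hP ν hν).le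
  obtain ⟨p, hp, hpb⟩ := hC₀ _ lam
    (fun ν hν κ hκ => norm_dualMatrix_mulVec_le hL (he ν hν κ hκ))
    (balancedWithin_of_forall_lt hτ hC hlam)
  have hsel' (B : Finset ι) : ∃ P : ι → J → ℝ, (B.card ≤ 2 ^ Fintype.card J → ∀ x ∈ B, P x ∈ G x) ∧
      ∀ ν ∈ τ.splits, ‖e ν (P ν.1.base - P ν.2.base)‖ ≤ c₀ := by
    by_cases hB : B.card ≤ 2 ^ Fintype.card J
    · exact (hsel B hB).imp fun P hP => ⟨fun _ => hP.1, hP.2⟩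
    · exact (hsel ∅ (Nat.zero_le _)).imp fun P hP => ⟨fun h => absurd h hB, hP.2⟩
  choose Q hQG hQ using hsel'
  have hpair : ∑ x, lam x ⬝ᵥ ∑ B, p B x • Q B x ≤ X := by
    simp only [dotProduct_sum, dotProduct_smul, ← smul_dotProduct]
    rw [Finset.sum_comm]
    exact Finset.sum_le_sum fun B _ => (le_abs_self _).trans
      (abs_sum_dotProduct_le_of_balancedWithin hτ hleaves (hpb B) (hQ B))
  linarith [hGlam _ (hp.sum_smul_mem hG hQG), le_abs_self X]

/-- The functions on the leaves of `τ` whose jump across each split `ν` has size at most `c`, as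
measured by the coordinate system `e ν`. -/
def Compatible {E : Type*} [AddCommGroup E] [Module ℝ E] (c : ℝ)
    (e : ClusterTree ι × ClusterTree ι → E ≃ₗ[ℝ] (J → ℝ)) (τ : ClusterTree ι) (P : ι → E) : Prop :=
  ∀ ν ∈ τ.splits, ‖e ν (P ν.1.base - P ν.2.base)‖ ≤ c

theorem exists_compatible_selection (J E : Type*) [Fintype J] [AddCommGroup E] [Module ℝ E]
    (hτ : τ.Nodup) (hleaves : τ.leaves = Finset.univ) {L c₀ : ℝ} (hL : 0 ≤ L) :
    ∃ C : ℝ, ∀ e : ClusterTree ι × ClusterTree ι → E ≃ₗ[ℝ] (J → ℝ),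
      (∀ ν ∈ τ.splits, ∀ κ ∈ subsplits ν, ∀ v, ‖e ν v‖ ≤ L * ‖e κ v‖) →
      ∀ G : ι → Set E, (∀ x, Convex ℝ (G x)) →
      (∀ B : Finset ι, B.card ≤ 2 ^ Fintype.card J →
        ∃ P, (∀ x ∈ B, P x ∈ G x) ∧ Compatible c₀ e τ P) →
      ∃ P, (∀ x, P x ∈ G x) ∧ Compatible C e τ P := by
  obtain ⟨C, hC⟩ := exists_compatible_selection_pi J hτ hleaves (c₀ := c₀) hL
  refine ⟨C, fun e he G hG hsel => ?_⟩
  set φ : E ≃ₗ[ℝ] (J → ℝ) := e (τ, τ)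
  obtain ⟨P, hPG, hP⟩ := hC (fun ν => φ.symm.trans (e ν))
    (fun ν hν κ hκ v => he ν hν κ hκ (φ.symm v)) (fun x => φ.symm ⁻¹' G x)
    (fun x => (hG x).linear_preimage φ.symm.toLinearMap) <| by
      intro B hB
      obtain ⟨Q, hQG, hQ⟩ := hsel B hB
      refine ⟨fun x => φ (Q x), fun x hx => ?_, fun ν hν => ?_⟩
      · simpa only [Set.mem_preimage, φ.symm_apply_apply] using hQG x hx
      · simpa only [← map_sub, LinearEquiv.trans_apply, φ.symm_apply_apply] using hQ ν hν
  refine ⟨fun x => φ.symm (P x), hPG, fun ν hν => ?_⟩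
  simpa only [LinearEquiv.trans_apply, map_sub] using hP ν hν

end Pairing

/-! ### Partial derivatives and polynomial jets -/

section PartialDerivatives

variable {n k : ℕ}

lemma pd1_contDiff (i : Fin n) {f : En n → ℝ} (hf : ContDiff ℝ (k + 1 : ℕ) f) :
    ContDiff ℝ k (pd1 i f) :=
  (hf.fderiv_right (m := k) (by norm_cast)).clm_apply contDiff_const

lemma pd1_congr {i : Fin n} {f g : En n → ℝ} {x : En n} (h : f =ᶠ[nhds x] g) :
    pd1 i f =ᶠ[nhds x] pd1 i g := by
  filter_upwards [h.fderiv (𝕜 := ℝ)] with y hy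
  rw [pd1, pd1, hy]

lemma pd1_comm (i j : Fin n) {f : En n → ℝ} (hf : ContDiff ℝ 2 f) :
    pd1 i (pd1 j f) = pd1 j (pd1 i f) := by
  have hd : Differentiable ℝ (fderiv ℝ f) :=
    (hf.fderiv_right (m := 1) (by norm_num)).differentiable one_ne_zero
  have hpd (i j : Fin n) (x : En n) : pd1 i (pd1 j f) x =
      fderiv ℝ (fderiv ℝ f) x (EuclideanSpace.single i 1) (EuclideanSpace.single j 1) := by
    change fderiv ℝ (fun y => fderiv ℝ f y (EuclideanSpace.single j 1)) x _ = _
    rw [fderiv_clm_apply (hd x) (differentiableAt_const _)]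
    simp
  ext x
  rw [hpd, hpd]
  exact (hf.contDiffAt.isSymmSndFDerivAt (by simp)).eq _ _

lemma foldr_pd1_contDiff (l : List (Fin n)) {f : En n → ℝ}
    (hf : ContDiff ℝ (k + l.length : ℕ) f) : ContDiff ℝ k (l.foldr pd1 f) := by
  induction l generalizing k with
  | nil => exact hf
  | cons i l ih =>
    refine pd1_contDiff i (ih ?_)
    rwa [add_right_comm, add_assoc]

lemma foldr_pd1_congr (l : List (Fin n)) {f g : En n → ℝ} {x : En n} (h : f =ᶠ[nhds x] g) :
    l.foldr pd1 f =ᶠ[nhds x] l.foldr pd1 g := by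
  induction l with
  | nil => exact h
  | cons i l ih => exact pd1_congr ih

lemma foldr_pd1_perm {l l' : List (Fin n)} (h : l.Perm l') {f : En n → ℝ}
    (hf : ContDiff ℝ l.length f) : l.foldr pd1 f = l'.foldr pd1 f := by
  induction h with
  | nil => rfl
  | cons i _ ih => exact congrArg (pd1 i) (ih (hf.of_le (by simp)))
  | swap i j l =>
    refine pd1_comm j i (foldr_pd1_contDiff (k := 2) l ?_)
    rwa [add_comm]
  | trans h₁ _ ih₁ ih₂ => rw [ih₁ hf, ih₂ (h₁.length_eq ▸ hf)]

lemma foldr_pd1_ofFn {f : En n → ℝ} (r : Fin k → Fin n) (hf : ContDiff ℝ k f) :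
    (List.ofFn r).foldr pd1 f =
      fun x => iteratedFDeriv ℝ k f x fun i => EuclideanSpace.single (r i) 1 := by
  induction k with
  | zero => ext x; simp
  | succ k ih =>
    ext x
    have hd : DifferentiableAt ℝ (iteratedFDeriv ℝ k f) x :=
      hf.differentiable_iteratedFDeriv (by exact_mod_cast k.lt_succ_self) x
    rw [List.ofFn_succ, List.foldr_cons, ih _ (hf.of_le (by simp)), pd1,
      fderiv_continuousMultilinear_apply_const_apply hd, iteratedFDeriv_succ_apply_left]
    rfl

/-- The list of differentiation directions encoded by a multi-index. -/
def directions (α : Fin n → ℕ) : List (Fin n) :=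
  (List.finRange n).flatMap fun i => List.replicate (α i) i

lemma length_directions (α : Fin n → ℕ) : (directions α).length = ∑ i, α i := by
  simp [directions, List.length_flatMap, Fin.sum_univ_def]

lemma count_directions (α : Fin n → ℕ) (i : Fin n) : (directions α).count i = α i := by
  have hcount : List.count i ∘ (fun j => List.replicate (α j) j) =
      fun j => if j = i then α j else 0 := by
    ext j
    simp [List.count_replicate]
  rw [directions, List.count_flatMap, hcount, ← Fin.sum_univ_def, Finset.sum_ite_eq',
    if_pos (Finset.mem_univ i)]

lemma pdalpha_eq_foldr (α : Fin n → ℕ) (f : En n → ℝ) :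
    pdalpha α f = (directions α).foldr pd1 f := by
  have hiter (i : Fin n) (j : ℕ) (g : En n → ℝ) :
      (List.replicate j i).foldr pd1 g = (pd1 i)^[j] g := by
    induction j with
    | zero => rfl
    | succ j ih => rw [List.replicate_succ, List.foldr_cons, ih, Function.iterate_succ_apply']
  simp only [directions, List.foldr_flatMap, hiter]
  rfl

lemma pdalpha_congr (α : Fin n → ℕ) {f g : En n → ℝ} {x : En n} (h : f =ᶠ[nhds x] g) :
    pdalpha α f x = pdalpha α g x := by
  simpa only [pdalpha_eq_foldr] using (foldr_pd1_congr (directions α) h).eq_of_nhds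

lemma exists_pdalpha_eq_iteratedFDeriv {α : Fin n → ℕ} (hα : ∑ i, α i = k) :
    ∃ r : Fin k → Fin n, ∀ f : En n → ℝ, ContDiff ℝ k f → ∀ x,
      pdalpha α f x = iteratedFDeriv ℝ k f x fun i => EuclideanSpace.single (r i) 1 := by
  rw [← length_directions] at hα
  subst hα
  refine ⟨(directions α).get, fun f hf x => ?_⟩
  rw [← congrFun (foldr_pd1_ofFn _ hf) x, List.ofFn_get, pdalpha_eq_foldr]

lemma exists_iteratedFDeriv_eq_pdalpha (r : Fin k → Fin n) :
    ∃ α : Fin n → ℕ, ∑ i, α i = k ∧ ∀ f : En n → ℝ, ContDiff ℝ k f → ∀ x,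
      iteratedFDeriv ℝ k f x (fun i => EuclideanSpace.single (r i) 1) = pdalpha α f x := by
  have hperm : (List.ofFn r).Perm (directions fun i => (List.ofFn r).count i) :=
    List.perm_iff_count.2 fun i => by rw [count_directions]
  refine ⟨fun i => (List.ofFn r).count i, ?_, fun f hf x => ?_⟩
  · rw [← length_directions, ← hperm.length_eq, List.length_ofFn]
  · rw [pdalpha_eq_foldr, ← foldr_pd1_perm hperm (by rwa [List.length_ofFn]), foldr_pd1_ofFn r hf]

lemma abs_pdalpha_le_norm_iteratedFDeriv {α : Fin n → ℕ} (hα : ∑ i, α i = k) {f : En n → ℝ}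
    (hf : ContDiff ℝ k f) (x : En n) : |pdalpha α f x| ≤ ‖iteratedFDeriv ℝ k f x‖ := by
  obtain ⟨r, hr⟩ := exists_pdalpha_eq_iteratedFDeriv hα
  rw [hr f hf]
  simpa using (iteratedFDeriv ℝ k f x).le_opNorm fun i => EuclideanSpace.single (r i) 1

lemma norm_le_of_forall_single (g : ContinuousMultilinearMap ℝ (fun _ : Fin k => En n) ℝ) {C : ℝ}
    (hC : 0 ≤ C) (h : ∀ r : Fin k → Fin n, |g fun i => EuclideanSpace.single (r i) 1| ≤ C) :
    ‖g‖ ≤ n ^ k * C := by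
  refine g.opNorm_le_bound (by positivity) fun v => ?_
  have hv : v = fun i => ∑ a : Fin n, v i a • (EuclideanSpace.single a 1 : En n) := by
    ext i a
    simp [Finset.sum_apply, Pi.single_apply]
  have hexpand : g v = ∑ r : Fin k → Fin n,
      (∏ i, v i (r i)) * g fun i => EuclideanSpace.single (r i) 1 := by
    conv_lhs => rw [hv, ContinuousMultilinearMap.map_sum]
    simp only [ContinuousMultilinearMap.map_smul_univ, smul_eq_mul]
  have hterm (r : Fin k → Fin n) :
      |(∏ i, v i (r i)) * g fun i => EuclideanSpace.single (r i) 1| ≤ (∏ i, ‖v i‖) * C := by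
    rw [abs_mul, Finset.abs_prod]
    gcongr with i
    · exact PiLp.norm_apply_le (v i) (r i)
    · exact h r
  calc ‖g v‖ ≤ ∑ _r : Fin k → Fin n, (∏ i, ‖v i‖) * C := by
        rw [hexpand]
        exact (Finset.abs_sum_le_sum_abs _ _).trans (Finset.sum_le_sum fun r _ => hterm r)
    _ = n ^ k * C * ∏ i, ‖v i‖ := by
        rw [Finset.sum_const, Finset.card_univ, Fintype.card_fun, Fintype.card_fin,
          Fintype.card_fin, nsmul_eq_mul, Nat.cast_pow]
        ring

lemma norm_iteratedFDeriv_le_of_pdalpha {f : En n → ℝ} (hf : ContDiff ℝ k f) {x : En n} {C : ℝ}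
    (hC : 0 ≤ C) (h : ∀ α : Fin n → ℕ, ∑ i, α i = k → |pdalpha α f x| ≤ C) :
    ‖iteratedFDeriv ℝ k f x‖ ≤ n ^ k * C :=
  norm_le_of_forall_single _ hC fun r => by
    obtain ⟨α, hα, hr⟩ := exists_iteratedFDeriv_eq_pdalpha r
    rw [hr f hf]
    exact h α hα

lemma iteratedFDeriv_eq_zero_of_pdalpha {f : En n → ℝ} (hf : ContDiff ℝ k f) {x : En n}
    (h : ∀ α : Fin n → ℕ, ∑ i, α i = k → pdalpha α f x = 0) : iteratedFDeriv ℝ k f x = 0 := by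
  simpa using norm_iteratedFDeriv_le_of_pdalpha hf le_rfl fun α hα => (abs_eq_zero.2 (h α hα)).le

lemma pdalpha_add (α : Fin n → ℕ) {f g : En n → ℝ} (hf : ContDiff ℝ (∑ i, α i : ℕ) f)
    (hg : ContDiff ℝ (∑ i, α i : ℕ) g) (x : En n) :
    pdalpha α (f + g) x = pdalpha α f x + pdalpha α g x := by
  obtain ⟨r, hr⟩ := exists_pdalpha_eq_iteratedFDeriv (n := n) (α := α) rfl
  rw [hr f hf, hr g hg, hr (f + g) (hf.add hg),
    iteratedFDeriv_add_apply hf.contDiffAt hg.contDiffAt]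
  rfl

lemma pdalpha_const_smul (α : Fin n → ℕ) (c : ℝ) {f : En n → ℝ}
    (hf : ContDiff ℝ (∑ i, α i : ℕ) f) (x : En n) : pdalpha α (c • f) x = c • pdalpha α f x := by
  obtain ⟨r, hr⟩ := exists_pdalpha_eq_iteratedFDeriv (n := n) (α := α) rfl
  rw [hr f hf, hr (c • f) (hf.const_smul c), iteratedFDeriv_const_smul_apply hf.contDiffAt]
  rfl

lemma pdalpha_sub (α : Fin n → ℕ) {f g : En n → ℝ} (hf : ContDiff ℝ (∑ i, α i : ℕ) f)
    (hg : ContDiff ℝ (∑ i, α i : ℕ) g) (x : En n) :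
    pdalpha α (f - g) x = pdalpha α f x - pdalpha α g x := by
  obtain ⟨r, hr⟩ := exists_pdalpha_eq_iteratedFDeriv (n := n) (α := α) rfl
  rw [hr f hf, hr g hg, hr (f - g) (hf.sub hg),
    iteratedFDeriv_sub_apply hf.contDiffAt hg.contDiffAt]
  rfl

end PartialDerivatives

section Growth

variable {E F : Type*} [NormedAddCommGroup E] [NormedSpace ℝ E] [NormedAddCommGroup F]
  [NormedSpace ℝ F] {m : ℕ} {f : E → F} {a : E}

/-- Integrate the bound on `D^m f` downwards from the base point `a`. -/
lemma norm_iteratedFDeriv_le_of_closedBall (hf : ContDiff ℝ m f) {A M δ r : ℝ} (hA : 0 ≤ A)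
    (hM : 0 ≤ M) (hδ : 0 ≤ δ) (hr : 0 ≤ r)
    (hfM : ∀ y ∈ Metric.closedBall a r, ‖iteratedFDeriv ℝ m f y‖ ≤ M)
    (hfa : ∀ k < m, ‖iteratedFDeriv ℝ k f a‖ ≤ A * δ ^ (m - k)) {i k : ℕ} (hk : k + i = m) :
    ∀ y ∈ Metric.closedBall a r, ‖iteratedFDeriv ℝ k f y‖ ≤ (A + M) * (δ + r) ^ i := by
  induction i generalizing k with
  | zero =>
    subst hk
    intro y hy
    rw [pow_zero, mul_one]
    exact (hfM y hy).trans (le_add_of_nonneg_left hA)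
  | succ i ih =>
    intro y hy
    have hd (z) (_ : z ∈ Metric.closedBall a r) : DifferentiableAt ℝ (iteratedFDeriv ℝ k f) z :=
      hf.differentiable_iteratedFDeriv (by norm_cast; omega) z
    have hderiv (z) (hz : z ∈ Metric.closedBall a r) :
        ‖fderiv ℝ (iteratedFDeriv ℝ k f) z‖ ≤ (A + M) * (δ + r) ^ i := by
      rw [norm_fderiv_iteratedFDeriv]
      exact ih (by omega) z hz
    have hsub : ‖iteratedFDeriv ℝ k f y - iteratedFDeriv ℝ k f a‖ ≤
        (A + M) * (δ + r) ^ i * ‖y - a‖ :=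
      (convex_closedBall a r).norm_image_sub_le_of_norm_fderiv_le hd hderiv
        (Metric.mem_closedBall_self hr) hy
    have hya : ‖y - a‖ ≤ r := mem_closedBall_iff_norm.1 hy
    have hbase : ‖iteratedFDeriv ℝ k f a‖ ≤ A * δ ^ (i + 1) := by
      simpa only [show m - k = i + 1 by omega] using hfa k (by omega)
    calc ‖iteratedFDeriv ℝ k f y‖
        ≤ ‖iteratedFDeriv ℝ k f a‖ + ‖iteratedFDeriv ℝ k f y - iteratedFDeriv ℝ k f a‖ :=
          norm_le_norm_add_norm_sub' _ _
      _ ≤ A * δ ^ (i + 1) + (A + M) * (δ + r) ^ i * r := by gcongr; exact hsub.trans (by gcongr)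
      _ ≤ (A + M) * (δ + r) ^ i * δ + (A + M) * (δ + r) ^ i * r := by
          rw [pow_succ, ← mul_assoc]
          gcongr <;> linarith
      _ = (A + M) * (δ + r) ^ (i + 1) := by ring

lemma norm_iteratedFDeriv_le_of_eq_zero (hf : ContDiff ℝ m f) {M : ℝ} (hM : 0 ≤ M)
    (hfM : ∀ y, ‖iteratedFDeriv ℝ m f y‖ ≤ M) (hfa : ∀ k < m, iteratedFDeriv ℝ k f a = 0) {k : ℕ}
    (hk : k ≤ m) (y : E) : ‖iteratedFDeriv ℝ k f y‖ ≤ M * dist y a ^ (m - k) := by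
  simpa only [zero_add] using norm_iteratedFDeriv_le_of_closedBall hf le_rfl hM le_rfl dist_nonneg
    (fun y _ => hfM y) (fun k hk => by rw [hfa k hk, norm_zero, zero_mul])
    (Nat.add_sub_of_le hk) y (Metric.mem_closedBall.2 le_rfl)

end Growth

section Polynomials

variable {n r : ℕ}

/-- A polynomial as a function on `ℝⁿ`. -/
def polyFun (p : MvPolynomial (Fin n) ℝ) (y : En n) : ℝ := MvPolynomial.eval y.ofLp p

lemma polyFun_add (p q : MvPolynomial (Fin n) ℝ) : polyFun (p + q) = polyFun p + polyFun q :=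
  funext fun _ => map_add _ p q

lemma polyFun_sub (p q : MvPolynomial (Fin n) ℝ) : polyFun (p - q) = polyFun p - polyFun q :=
  funext fun _ => map_sub _ p q

lemma polyFun_smul (c : ℝ) (p : MvPolynomial (Fin n) ℝ) : polyFun (c • p) = c • polyFun p :=
  funext fun _ => MvPolynomial.smul_eval _ p c

lemma polyFun_contDiff (p : MvPolynomial (Fin n) ℝ) {k : WithTop ℕ∞} :
    ContDiff ℝ k (polyFun p) := by
  induction p using MvPolynomial.induction_on with
  | C c =>
    have hconst : polyFun (MvPolynomial.C c : MvPolynomial (Fin n) ℝ) = fun _ => c :=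
      funext fun y => MvPolynomial.eval_C c
    exact hconst ▸ contDiff_const
  | add p q hp hq => exact polyFun_add p q ▸ hp.add hq
  | mul_X p i hp =>
    have hmul : polyFun (p * MvPolynomial.X i) = fun y => polyFun p y * y i :=
      funext fun y => by rw [polyFun, map_mul, MvPolynomial.eval_X, polyFun]
    exact hmul ▸ hp.mul (EuclideanSpace.proj i : En n →L[ℝ] ℝ).contDiff

/-- The derivative `∂^α p(x)` as a linear functional of the polynomial `p`. -/
def polyDeriv (α : Fin n → ℕ) (x : En n) : MvPolynomial (Fin n) ℝ →ₗ[ℝ] ℝ where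
  toFun p := pdalpha α (polyFun p) x
  map_add' p q := by rw [polyFun_add, pdalpha_add α (polyFun_contDiff p) (polyFun_contDiff q)]
  map_smul' c p := by rw [polyFun_smul, pdalpha_const_smul α c (polyFun_contDiff p)]; rfl

lemma polyDeriv_apply (α : Fin n → ℕ) (x : En n) (p : MvPolynomial (Fin n) ℝ) :
    polyDeriv α x p = pdalpha α (polyFun p) x := rfl

/-- The tensor product `y ↦ ∏ j, g j (y j)` of univariate polynomials. -/
def prodFun (g : Fin n → Polynomial ℝ) (y : En n) : ℝ := ∏ j, (g j).eval (y j)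

lemma pd1_prodFun (i : Fin n) (g : Fin n → Polynomial ℝ) :
    pd1 i (prodFun g) = prodFun (Function.update g i (g i).derivative) := by
  ext y
  have hcoord (j : Fin n) : HasFDerivAt (fun z : En n => (g j).eval (z j))
      (((g j).derivative.eval (y j)) • (EuclideanSpace.proj j : En n →L[ℝ] ℝ)) y :=
    HasDerivAt.comp_hasFDerivAt (f := fun z : En n => z j) y ((g j).hasDerivAt (y j))
      (EuclideanSpace.proj j : En n →L[ℝ] ℝ).hasFDerivAt
  have hprod := HasFDerivAt.finsetProd (u := Finset.univ) fun j _ => hcoord j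
  have hpartial (j : Fin n) : (EuclideanSpace.proj j : En n →L[ℝ] ℝ) (EuclideanSpace.single i 1) =
      if j = i then 1 else 0 := by simp
  have herase : ∏ j ∈ Finset.univ.erase i, (Function.update g i (g i).derivative j).eval (y j) =
      ∏ j ∈ Finset.univ.erase i, (g j).eval (y j) :=
    Finset.prod_congr rfl fun j hj => by rw [Function.update_of_ne (Finset.ne_of_mem_erase hj)]
  rw [pd1, show prodFun g = fun z => ∏ j, (g j).eval (z j) from rfl, hprod.fderiv, prodFun,
    ← Finset.prod_erase_mul _ _ (Finset.mem_univ i), Function.update_self, herase]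
  simp [hpartial]

lemma pdalpha_prodFun (α : Fin n → ℕ) (g : Fin n → Polynomial ℝ) :
    pdalpha α (prodFun g) = prodFun fun j => Polynomial.derivative^[α j] (g j) := by
  have hfoldr (l : List (Fin n)) :
      l.foldr pd1 (prodFun g) = prodFun fun j => Polynomial.derivative^[l.count j] (g j) := by
    induction l with
    | nil => rfl
    | cons i l ih =>
      rw [List.foldr_cons, ih, pd1_prodFun]
      congr 1
      ext1 j
      rcases eq_or_ne j i with rfl | hj
      · rw [Function.update_self, List.count_cons_self, Function.iterate_succ_apply']
      · rw [Function.update_of_ne hj, List.count_cons_of_ne hj.symm]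
  simp only [pdalpha_eq_foldr, hfoldr, count_directions]

/-- The monomial `(X - z)^β`. -/
def centeredMonomial (z : En n) (β : Fin n → ℕ) : MvPolynomial (Fin n) ℝ :=
  ∏ i, (MvPolynomial.X i - MvPolynomial.C (z i)) ^ β i

lemma polyFun_centeredMonomial (z : En n) (β : Fin n → ℕ) :
    polyFun (centeredMonomial z β) =
      prodFun fun j => (Polynomial.X - Polynomial.C (z j)) ^ β j := by
  ext y
  simp [polyFun, prodFun, centeredMonomial, map_prod]

lemma polyDeriv_centeredMonomial (α β : Fin n → ℕ) (x z : En n) :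
    polyDeriv α x (centeredMonomial z β) =
      ∏ j, ((β j).descFactorial (α j) : ℝ) * (x j - z j) ^ (β j - α j) := by
  rw [polyDeriv_apply, polyFun_centeredMonomial, pdalpha_prodFun, prodFun]
  simp [Polynomial.iterate_derivative_X_sub_pow]

lemma polyDeriv_centeredMonomial_of_sum_lt {α β : Fin n → ℕ} (h : ∑ i, β i < ∑ i, α i)
    (x z : En n) : polyDeriv α x (centeredMonomial z β) = 0 := by
  obtain ⟨j, hj, hlt⟩ := Finset.exists_lt_of_sum_lt h
  rw [polyDeriv_centeredMonomial, Finset.prod_eq_zero hj]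
  rw [Nat.descFactorial_of_lt hlt, Nat.cast_zero, zero_mul]

lemma polyDeriv_centeredMonomial_self (α β : Fin n → ℕ) (x : En n) :
    polyDeriv α x (centeredMonomial x β) =
      if α = β then ((∏ i, (β i).factorial : ℕ) : ℝ) else 0 := by
  rw [polyDeriv_centeredMonomial]
  split_ifs with h
  · simp [h, Nat.descFactorial_self]
  · obtain ⟨j, hj⟩ := Function.ne_iff.1 h
    refine Finset.prod_eq_zero (Finset.mem_univ j) ?_
    rcases hj.lt_or_gt with hlt | hlt
    · rw [sub_self, zero_pow (Nat.sub_ne_zero_of_lt hlt), mul_zero]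
    · rw [Nat.descFactorial_of_lt hlt, Nat.cast_zero, zero_mul]

lemma polyDeriv_eq_zero_of_totalDegree_lt {p : MvPolynomial (Fin n) ℝ} {α : Fin n → ℕ}
    (h : p.totalDegree < ∑ i, α i) (x : En n) : polyDeriv α x p = 0 := by
  rw [p.as_sum, map_sum]
  refine Finset.sum_eq_zero fun s hs => ?_
  have hmono : MvPolynomial.monomial s (p.coeff s) = p.coeff s • centeredMonomial 0 s := by
    rw [MvPolynomial.monomial_eq, centeredMonomial, MvPolynomial.smul_eq_C_mul,
      Finsupp.prod_fintype _ _ fun i => pow_zero _]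
    simp
  rw [hmono, map_smul, polyDeriv_centeredMonomial_of_sum_lt, smul_zero]
  refine lt_of_le_of_lt ?_ h
  rw [← Finsupp.sum_fintype s (fun _ k => k) fun _ => rfl]
  exact MvPolynomial.le_totalDegree hs

lemma iteratedFDeriv_polyFun_eq_zero {p : MvPolynomial (Fin n) ℝ} {k : ℕ} (h : p.totalDegree < k)
    (x : En n) : iteratedFDeriv ℝ k (polyFun p) x = 0 :=
  iteratedFDeriv_eq_zero_of_pdalpha (polyFun_contDiff p) fun _ hα =>
    polyDeriv_eq_zero_of_totalDegree_lt (h.trans_eq hα.symm) x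

lemma eq_zero_of_polyDeriv_eq_zero {p : MvPolynomial (Fin n) ℝ} (hp : p.totalDegree ≤ r) {x : En n}
    (h : ∀ α : Fin n → ℕ, ∑ i, α i ≤ r → polyDeriv α x p = 0) : p = 0 := by
  refine MvPolynomial.funext fun v => ?_
  have hbound := norm_iteratedFDeriv_le_of_eq_zero (m := r + 1) (k := 0) (a := x)
    (polyFun_contDiff p) le_rfl
    (fun y => by rw [iteratedFDeriv_polyFun_eq_zero (Nat.lt_succ_of_le hp), norm_zero])
    (fun k hk => iteratedFDeriv_eq_zero_of_pdalpha (polyFun_contDiff p) fun α hα =>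
      h α (by omega)) (Nat.zero_le _) (WithLp.toLp 2 v)
  simpa [polyFun] using hbound

end Polynomials

section Jets

variable {n r : ℕ}

/-- The multi-indices of order at most `r`, encoded as in `jetScalar`. -/
abbrev JetIndex (n r : ℕ) : Type := {α : Fin n → Fin (r + 1) // ∑ i, (α i : ℕ) ≤ r}

namespace JetIndex

/-- The underlying multi-index with natural number entries. -/
def exponent (α : JetIndex n r) (i : Fin n) : ℕ := α.1 i

lemma exponent_injective : Function.Injective (exponent : JetIndex n r → Fin n → ℕ) :=
  fun _ _ h => Subtype.ext (funext fun i => Fin.ext (congrFun h i))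

lemma exists_exponent_eq {α : Fin n → ℕ} (hα : ∑ i, α i ≤ r) : ∃ β : JetIndex n r, β.exponent = α :=
  ⟨⟨fun i => ⟨α i, Nat.lt_succ_of_le
    ((Finset.single_le_sum (fun _ _ => Nat.zero_le _) (Finset.mem_univ i)).trans hα)⟩, hα⟩, rfl⟩

/-- The multi-index padded by the symbol `none` to a multiset of size `r`. -/
def toSym (α : JetIndex n r) : Sym (Option (Fin n)) r :=
  ⟨∑ i, Multiset.replicate (α.exponent i) (some i) +
      Multiset.replicate (r - ∑ i, α.exponent i) none, by
    simpa using Nat.add_sub_of_le (show ∑ i, α.exponent i ≤ r from α.2)⟩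

lemma count_toSym (α : JetIndex n r) (i : Fin n) :
    (α.toSym : Multiset (Option (Fin n))).count (some i) = α.exponent i := by
  change (∑ i, Multiset.replicate (α.exponent i) (some i) +
    Multiset.replicate (r - ∑ i, α.exponent i) none).count (some i) = _
  simp [Multiset.count_sum', Multiset.count_replicate]

lemma toSym_injective : Function.Injective (toSym : JetIndex n r → Sym (Option (Fin n)) r) :=
  fun α β h => exponent_injective (funext fun i => by rw [← count_toSym, h, count_toSym])

lemma card_le_choose : Fintype.card (JetIndex n r) ≤ (n + r).choose n := by
  refine (Fintype.card_le_of_injective _ toSym_injective).trans_eq ?_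
  rw [Sym.card_sym_eq_choose, Fintype.card_option, Fintype.card_fin, Nat.add_right_comm,
    Nat.add_sub_cancel, Nat.choose_symm_add]

end JetIndex

/-- The polynomial of degree at most `r` with derivatives `∂^α p(x) = c α`. -/
def taylorPoly (x : En n) (c : JetIndex n r → ℝ) : MvPolynomial (Fin n) ℝ :=
  ∑ α, (c α / ((∏ i, (α.exponent i).factorial : ℕ) : ℝ)) • centeredMonomial x α.exponent

lemma jetScalar_eq_taylorPoly (f : En n → ℝ) (x : En n) :
    jetScalar (r + 1) f x = taylorPoly x fun α : JetIndex n r => pdalpha α.exponent f x := by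
  simp only [jetScalar, taylorPoly, MvPolynomial.smul_eq_C_mul, centeredMonomial]
  rw [← Finset.sum_subtype_eq_sum_filter, Finset.subtype_univ]
  rfl

lemma totalDegree_centeredMonomial_le (z : En n) (β : Fin n → ℕ) :
    (centeredMonomial z β).totalDegree ≤ ∑ i, β i := by
  refine (MvPolynomial.totalDegree_finsetProd _ _).trans (Finset.sum_le_sum fun i _ => ?_)
  have hX : (MvPolynomial.X i - MvPolynomial.C (z i)).totalDegree ≤ 1 := by
    simpa using MvPolynomial.totalDegree_sub (MvPolynomial.X i) (MvPolynomial.C (z i))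
  exact (MvPolynomial.totalDegree_pow _ _).trans ((Nat.mul_le_mul_left _ hX).trans_eq (mul_one _))

lemma totalDegree_taylorPoly_le (x : En n) (c : JetIndex n r → ℝ) :
    (taylorPoly x c).totalDegree ≤ r := by
  refine MvPolynomial.totalDegree_finsetSum_le fun α _ => ?_
  exact (MvPolynomial.totalDegree_smul_le _ _).trans
    ((totalDegree_centeredMonomial_le x _).trans α.2)

lemma polyDeriv_taylorPoly (x : En n) (c : JetIndex n r → ℝ) (β : JetIndex n r) :
    polyDeriv β.exponent x (taylorPoly x c) = c β := by
  rw [taylorPoly, map_sum]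
  simp only [map_smul, polyDeriv_centeredMonomial_self, JetIndex.exponent_injective.eq_iff,
    smul_eq_mul, mul_ite, mul_zero, Finset.sum_ite_eq, Finset.mem_univ, if_true]
  refine div_mul_cancel₀ _ (Nat.cast_ne_zero.2 ?_)
  exact Finset.prod_ne_zero_iff.2 fun i _ => (Nat.factorial_pos _).ne'

lemma polyDeriv_jetScalar (f : En n → ℝ) (x : En n) {α : Fin n → ℕ} (hα : ∑ i, α i ≤ r) :
    polyDeriv α x (jetScalar (r + 1) f x) = pdalpha α f x := by
  obtain ⟨β, rfl⟩ := JetIndex.exists_exponent_eq hα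
  rw [jetScalar_eq_taylorPoly, polyDeriv_taylorPoly]

lemma totalDegree_jetScalar_le (f : En n → ℝ) (x : En n) :
    (jetScalar (r + 1) f x).totalDegree ≤ r :=
  jetScalar_eq_taylorPoly (r := r) f x ▸ totalDegree_taylorPoly_le x _

lemma eq_of_polyDeriv_eq {p q : MvPolynomial (Fin n) ℝ} (hp : p.totalDegree ≤ r)
    (hq : q.totalDegree ≤ r) {x : En n}
    (h : ∀ α : Fin n → ℕ, ∑ i, α i ≤ r → polyDeriv α x p = polyDeriv α x q) : p = q :=
  sub_eq_zero.1 <| eq_zero_of_polyDeriv_eq_zero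
    ((MvPolynomial.totalDegree_sub p q).trans (max_le hp hq))
    fun α hα => by rw [map_sub, h α hα, sub_self]

lemma jetScalar_eq_of_eventuallyEq {f : En n → ℝ} {p : MvPolynomial (Fin n) ℝ} {x : En n}
    (hp : p.totalDegree ≤ r) (h : f =ᶠ[nhds x] polyFun p) : jetScalar (r + 1) f x = p :=
  eq_of_polyDeriv_eq (totalDegree_jetScalar_le f x) hp fun α hα => by
    rw [polyDeriv_jetScalar f x hα, pdalpha_congr α h, polyDeriv_apply]

end Jets

section Charts

variable {n r D : ℕ}

/-- The space `𝒫` of polynomials of degree at most `r`. -/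
abbrev JetSpace (n r : ℕ) : Submodule ℝ (MvPolynomial (Fin n) ℝ) :=
  MvPolynomial.restrictTotalDegree (Fin n) ℝ r

lemma JetSpace.totalDegree_le (p : JetSpace n r) : (p : MvPolynomial (Fin n) ℝ).totalDegree ≤ r :=
  (MvPolynomial.mem_restrictTotalDegree _ _ _).1 p.2

/-- The coordinates `∂^α P_j(z) / δ^(r+1-|α|)` on `𝒫^D`, adapted to the length scale `δ` at `z`. -/
def scaledCoords (z : En n) (δ : ℝ) : (Fin D → JetSpace n r) →ₗ[ℝ] (JetIndex n r × Fin D → ℝ) :=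
  LinearMap.pi fun i => (δ ^ (r + 1 - ∑ k, i.1.exponent k))⁻¹ •
    polyDeriv i.1.exponent z ∘ₗ (JetSpace n r).subtype ∘ₗ LinearMap.proj i.2

lemma scaledCoords_apply (z : En n) (δ : ℝ) (P : Fin D → JetSpace n r) (i : JetIndex n r × Fin D) :
    scaledCoords z δ P i =
      (δ ^ (r + 1 - ∑ k, i.1.exponent k))⁻¹ * polyDeriv i.1.exponent z (P i.2) := rfl

lemma scaledCoords_bijective (z : En n) {δ : ℝ} (hδ : δ ≠ 0) :
    Function.Bijective (scaledCoords z δ : (Fin D → JetSpace n r) →ₗ[ℝ] _) := by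
  have hweight (k : ℕ) : (δ ^ k)⁻¹ ≠ 0 := inv_ne_zero (pow_ne_zero k hδ)
  refine ⟨(injective_iff_map_eq_zero _).2 fun P hP => ?_, fun v => ?_⟩
  · refine funext fun j => Subtype.ext (eq_zero_of_polyDeriv_eq_zero (x := z)
      (JetSpace.totalDegree_le (P j)) fun α hα => ?_)
    obtain ⟨β, rfl⟩ := JetIndex.exists_exponent_eq hα
    exact (mul_eq_zero.1 (congrFun hP (β, j))).resolve_left (hweight _)
  · refine ⟨fun j => ⟨taylorPoly z fun α => δ ^ (r + 1 - ∑ k, α.exponent k) * v (α, j),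
      (MvPolynomial.mem_restrictTotalDegree _ _ _).2 (totalDegree_taylorPoly_le z _)⟩, ?_⟩
    ext i
    rw [scaledCoords_apply, polyDeriv_taylorPoly, inv_mul_cancel_left₀ (pow_ne_zero _ hδ)]

lemma norm_scaledCoords_le_iff (z : En n) {δ c : ℝ} (hδ : 0 < δ) (hc : 0 ≤ c)
    (P : Fin D → JetSpace n r) : ‖scaledCoords z δ P‖ ≤ c ↔
      ∀ j, ∀ α : Fin n → ℕ, ∑ i, α i ≤ r →
        |polyDeriv α z (P j)| ≤ c * δ ^ (r + 1 - ∑ i, α i) := by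
  have hcoord (i : JetIndex n r × Fin D) : ‖scaledCoords z δ P i‖ ≤ c ↔
      |polyDeriv i.1.exponent z (P i.2)| ≤ c * δ ^ (r + 1 - ∑ k, i.1.exponent k) := by
    have hpos : 0 < δ ^ (r + 1 - ∑ k, i.1.exponent k) := pow_pos hδ _
    rw [scaledCoords_apply, norm_mul, norm_inv, Real.norm_of_nonneg hpos.le, Real.norm_eq_abs,
      inv_mul_le_iff₀ hpos, mul_comm c]
  rw [pi_norm_le_iff_of_nonneg hc]
  refine ⟨fun h j α hα => ?_, fun h i => (hcoord i).2 (h i.2 _ i.1.2)⟩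
  obtain ⟨β, rfl⟩ := JetIndex.exists_exponent_eq hα
  exact (hcoord (β, j)).1 (h (β, j))

lemma norm_iteratedFDeriv_polyFun_le {z : En n} {δ : ℝ} (hδ : 0 < δ) (P : Fin D → JetSpace n r)
    (j : Fin D) {k : ℕ} (hk : k ≤ r) :
    ‖iteratedFDeriv ℝ k (polyFun (P j)) z‖ ≤
      (n + 1) ^ r * ‖scaledCoords z δ P‖ * δ ^ (r + 1 - k) := by
  have hle := norm_iteratedFDeriv_le_of_pdalpha (x := z) (k := k) (polyFun_contDiff (P j))
    (C := ‖scaledCoords z δ P‖ * δ ^ (r + 1 - k)) (by positivity) fun α hα => by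
      subst hα
      exact (norm_scaledCoords_le_iff z hδ (norm_nonneg _) P).1 le_rfl j α hk
  have hn : (n : ℝ) ^ k ≤ (n + 1) ^ r :=
    (pow_le_pow_left₀ n.cast_nonneg (by linarith) k).trans (pow_le_pow_right₀ (by simp) hk)
  calc _ ≤ (n : ℝ) ^ k * (‖scaledCoords z δ P‖ * δ ^ (r + 1 - k)) := hle
    _ ≤ (n + 1) ^ r * (‖scaledCoords z δ P‖ * δ ^ (r + 1 - k)) := by gcongr
    _ = _ := (mul_assoc ..).symm

lemma norm_scaledCoords_le_mul {z w : En n} {δ δ' R : ℝ} (hδ : 0 < δ) (hδ' : 0 < δ')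
    (hz : dist z w ≤ R * δ) (hle : δ' ≤ R * δ) (P : Fin D → JetSpace n r) :
    ‖scaledCoords z δ P‖ ≤ (n + 1) ^ r * (2 * R + 1) ^ (r + 1) * ‖scaledCoords w δ' P‖ := by
  have hR : 0 ≤ R := nonneg_of_mul_nonneg_left (hδ'.le.trans hle) hδ
  refine (norm_scaledCoords_le_iff z hδ (by positivity) P).2 fun j α hα => ?_
  have hgrowth := norm_iteratedFDeriv_le_of_closedBall (m := r + 1) (a := w) (r := dist z w)
    (A := (n + 1) ^ r * ‖scaledCoords w δ' P‖) (polyFun_contDiff (P j)) (by positivity) le_rfl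
    hδ'.le dist_nonneg
    (fun y _ => by
      rw [iteratedFDeriv_polyFun_eq_zero (Nat.lt_succ_of_le (JetSpace.totalDegree_le (P j))),
        norm_zero])
    (fun k hk => norm_iteratedFDeriv_polyFun_le hδ' P j (Nat.le_of_lt_succ hk))
    (Nat.add_sub_of_le (hα.trans r.le_succ)) z (Metric.mem_closedBall.2 le_rfl)
  have hscale : (δ' + dist z w) ^ (r + 1 - ∑ i, α i) ≤
      (2 * R + 1) ^ (r + 1) * δ ^ (r + 1 - ∑ i, α i) :=
    calc _ ≤ ((2 * R + 1) * δ) ^ (r + 1 - ∑ i, α i) := by gcongr; linarith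
      _ = (2 * R + 1) ^ (r + 1 - ∑ i, α i) * δ ^ (r + 1 - ∑ i, α i) := mul_pow ..
      _ ≤ _ := by gcongr <;> [linarith; exact Nat.sub_le _ _]
  calc _ ≤ ‖iteratedFDeriv ℝ (∑ i, α i) (polyFun (P j)) z‖ :=
        abs_pdalpha_le_norm_iteratedFDeriv rfl (polyFun_contDiff _) z
    _ ≤ _ := hgrowth
    _ ≤ (n + 1) ^ r * ‖scaledCoords w δ' P‖ *
        ((2 * R + 1) ^ (r + 1) * δ ^ (r + 1 - ∑ i, α i)) := by rw [add_zero]; gcongr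
    _ = _ := by ring

end Charts

section Whitney

variable {n r D : ℕ}

/-- The jet `J_x F`, as an element of `𝒫^D`. -/
def jetAt (r : ℕ) (F : En n → Fin D → ℝ) (x : En n) : Fin D → JetSpace n r := fun j =>
  ⟨jetScalar (r + 1) (fun y => F y j) x,
    (MvPolynomial.mem_restrictTotalDegree _ _ _).2 (totalDegree_jetScalar_le _ x)⟩

lemma norm_iteratedFDeriv_sub_polyFun_le {f : En n → ℝ} (hf : ContDiff ℝ (r + 1 : ℕ) f) {M : ℝ}
    (hM : 0 ≤ M) (hfM : ∀ y, ‖iteratedFDeriv ℝ (r + 1) f y‖ ≤ M) {p : MvPolynomial (Fin n) ℝ}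
    (hp : p.totalDegree ≤ r) {a : En n}
    (hcontact : ∀ k < r + 1, iteratedFDeriv ℝ k (f - polyFun p) a = 0) {k : ℕ} (hk : k ≤ r)
    (x : En n) : ‖iteratedFDeriv ℝ k (f - polyFun p) x‖ ≤ M * dist x a ^ (r + 1 - k) := by
  have hpoly : ContDiff ℝ (r + 1 : ℕ) (polyFun p) := polyFun_contDiff p
  have hsub : ContDiff ℝ (r + 1 : ℕ) (f - polyFun p) := hf.sub hpoly
  refine norm_iteratedFDeriv_le_of_eq_zero hsub hM (fun z => ?_) hcontact (hk.trans r.le_succ) x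
  rw [iteratedFDeriv_sub_apply hf.contDiffAt hpoly.contDiffAt,
    iteratedFDeriv_polyFun_eq_zero (Nat.lt_succ_of_le hp), sub_zero]
  exact hfM z

lemma iteratedFDeriv_sub_jetScalar_eq_zero {f : En n → ℝ} (hf : ContDiff ℝ r f) (x : En n)
    {k : ℕ} (hk : k ≤ r) : iteratedFDeriv ℝ k (f - polyFun (jetScalar (r + 1) f x)) x = 0 := by
  have hf : ContDiff ℝ k f := hf.of_le (by exact_mod_cast hk)
  have hsub : ContDiff ℝ k (f - polyFun (jetScalar (r + 1) f x)) := hf.sub (polyFun_contDiff _)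
  refine iteratedFDeriv_eq_zero_of_pdalpha hsub fun α hα => ?_
  subst hα
  rw [pdalpha_sub α hf (polyFun_contDiff _), ← polyDeriv_apply, polyDeriv_jetScalar f x hk,
    sub_self]

lemma norm_scaledCoords_jetAt_sub_le {F : En n → Fin D → ℝ} (hF : ContDiff ℝ (r + 1 : ℕ) F)
    {A : ℝ} (hA : 0 ≤ A) (hFA : CmHomogLE (r + 1) F A) {x y : En n} (hxy : 0 < dist x y) :
    ‖scaledCoords x (dist x y) (jetAt r F x - jetAt r F y)‖ ≤ n ^ (r + 1) * A := by
  refine (norm_scaledCoords_le_iff x hxy (by positivity) _).2 fun j α hα => ?_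
  have hf : ContDiff ℝ (r + 1 : ℕ) fun y => F y j := contDiff_pi.1 hF j
  have hα' : ((∑ i, α i : ℕ) : WithTop ℕ∞) ≤ (r + 1 : ℕ) := by exact_mod_cast hα.trans r.le_succ
  have hsub : polyDeriv α x ↑((jetAt r F x - jetAt r F y) j) =
      pdalpha α ((fun z => F z j) - polyFun (jetScalar (r + 1) (fun z => F z j) y)) x := by
    rw [pdalpha_sub α (hf.of_le hα') (polyFun_contDiff _), ← polyDeriv_jetScalar _ x hα,
      ← polyDeriv_apply, ← map_sub]
    rfl
  rw [hsub]
  refine (abs_pdalpha_le_norm_iteratedFDeriv rfl ((hf.of_le hα').sub (polyFun_contDiff _)) x).trans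
    (norm_iteratedFDeriv_sub_polyFun_le hf (by positivity)
      (fun z => norm_iteratedFDeriv_le_of_pdalpha hf hA fun β hβ => hFA β hβ z j)
      (totalDegree_jetScalar_le _ y) (fun k hk => ?_) hα x)
  exact iteratedFDeriv_sub_jetScalar_eq_zero (hf.of_le (by exact_mod_cast r.le_succ)) y
    (Nat.le_of_lt_succ hk)

end Whitney

/-! ### Gluing with cutoff functions -/

section Gluing

variable {E F : Type*} [NormedAddCommGroup E] [NormedSpace ℝ E]
  [NormedAddCommGroup F] [NormedSpace ℝ F]

lemma exists_norm_iteratedFDeriv_le_of_hasCompactSupport {m : ℕ} {f : E → F}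
    (hf : ContDiff ℝ m f) (hsupp : HasCompactSupport f) :
    ∃ B : ℝ, 0 ≤ B ∧ ∀ i ≤ m, ∀ y, ‖iteratedFDeriv ℝ i f y‖ ≤ B := by
  have hbound (i : ℕ) : ∃ B : ℝ, i ≤ m → ∀ y, ‖iteratedFDeriv ℝ i f y‖ ≤ B := by
    by_cases hi : i ≤ m
    · obtain ⟨B, hB⟩ := (hsupp.iteratedFDeriv (𝕜 := ℝ) i).exists_bound_of_continuous
        (hf.continuous_iteratedFDeriv (m := i) (by exact_mod_cast hi))
      exact ⟨B, fun _ => hB⟩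
    · exact ⟨0, fun h => absurd h hi⟩
  choose B hB using hbound
  refine ⟨∑ i ∈ Finset.range (m + 1), |B i|, Finset.sum_nonneg fun _ _ => abs_nonneg _,
    fun i hi y => (hB i hi y).trans ((le_abs_self _).trans ?_)⟩
  exact Finset.single_le_sum (f := fun i => |B i|) (fun _ _ => abs_nonneg _)
    (Finset.mem_range.2 (Nat.lt_succ_of_le hi))

lemma norm_iteratedFDeriv_comp_inv_smul_sub_le {m i : ℕ} {f : E → F} (hf : ContDiff ℝ m f)
    (hi : i ≤ m) (a y : E) {h : ℝ} (hh : 0 < h) :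
    ‖iteratedFDeriv ℝ i (fun z => f (h⁻¹ • (z - a))) y‖ * h ^ i ≤
      ‖iteratedFDeriv ℝ i f (h⁻¹ • (y - a))‖ := by
  let L : E →L[ℝ] E := h⁻¹ • ContinuousLinearMap.id ℝ E
  have hL : ‖L‖ ≤ h⁻¹ := L.opNorm_le_bound (by positivity) fun x => by
    rw [show L x = h⁻¹ • x from rfl, norm_smul, norm_inv, Real.norm_of_nonneg hh.le]
  have hcomp := (iteratedFDeriv ℝ i f (L (y - a))).norm_compContinuousLinearMap_le fun _ => L
  rw [Finset.prod_const, Finset.card_univ, Fintype.card_fin] at hcomp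
  calc ‖iteratedFDeriv ℝ i (fun z => (f ∘ L) (z - a)) y‖ * h ^ i
      ≤ ‖iteratedFDeriv ℝ i f (L (y - a))‖ * ‖L‖ ^ i * h ^ i := by
        rw [iteratedFDeriv_comp_sub, L.iteratedFDeriv_comp_right hf _ (by exact_mod_cast hi)]
        gcongr
    _ ≤ ‖iteratedFDeriv ℝ i f (L (y - a))‖ * h⁻¹ ^ i * h ^ i := by gcongr
    _ = ‖iteratedFDeriv ℝ i f (L (y - a))‖ := by
        rw [mul_assoc, ← mul_pow, inv_mul_cancel₀ hh.ne', one_pow, mul_one]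

section Cutoff

variable [FiniteDimensional ℝ E]

/-- A bump function equal to `1` near the closed ball of radius `j` and to `0` near the complement
of the open ball of radius `j + 1`, the model for cutoffs in the annulus between the two. -/
def annulusBump (E : Type*) [NormedAddCommGroup E] [NormedSpace ℝ E]
    (j : ℕ) : ContDiffBump (0 : E) where
  rIn := j + 1 / 3
  rOut := j + 2 / 3
  rIn_pos := by positivity
  rIn_lt_rOut := by linarith

lemma annulusBump_eventuallyEq_one {j : ℕ} {y : E} (hy : ‖y‖ ≤ j) :
    annulusBump E j =ᶠ[nhds y] 1 := by
  refine (annulusBump E j).eventuallyEq_one_of_mem_ball (mem_ball_zero_iff.2 ?_)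
  change _ < (j : ℝ) + 1 / 3
  linarith

lemma annulusBump_eventuallyEq_zero {j : ℕ} {y : E} (hy : j + 1 ≤ ‖y‖) :
    annulusBump E j =ᶠ[nhds y] 0 := by
  have hlt : (annulusBump E j).rOut < ‖y‖ := by
    change (j : ℝ) + 2 / 3 < _
    linarith
  filter_upwards [continuous_norm.continuousAt.eventually (lt_mem_nhds hlt)] with z hz
  exact (annulusBump E j).zero_of_le_dist (by simpa only [dist_zero_right] using hz.le)

lemma exists_annulus_cutoff (E : Type*) [NormedAddCommGroup E] [NormedSpace ℝ E]
    [FiniteDimensional ℝ E] (m N : ℕ) :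
    ∃ B : ℝ, 0 ≤ B ∧ ∀ (a : E) (h : ℝ), 0 < h → ∀ j < N,
      ∃ χ : E → ℝ, ContDiff ℝ m χ ∧ (∀ y, dist a y ≤ j * h → χ =ᶠ[nhds y] 1) ∧
        (∀ y, (j + 1) * h ≤ dist a y → χ =ᶠ[nhds y] 0) ∧
        ∀ i ≤ m, ∀ y, ‖iteratedFDeriv ℝ i χ y‖ * h ^ i ≤ B := by
  have hsmooth (j : ℕ) : ContDiff ℝ m (annulusBump E j) := by
    exact_mod_cast (annulusBump E j).contDiff (n := (m : ℕ∞))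
  choose B hB₀ hB using fun j => exists_norm_iteratedFDeriv_le_of_hasCompactSupport
    (hsmooth j) (annulusBump E j).hasCompactSupport
  refine ⟨∑ j ∈ Finset.range N, B j, Finset.sum_nonneg fun j _ => hB₀ j, fun a h hh j hj => ?_⟩
  have hnorm (y : E) : ‖h⁻¹ • (y - a)‖ = h⁻¹ * dist a y := by
    rw [norm_smul, norm_inv, Real.norm_of_nonneg hh.le, dist_comm, dist_eq_norm]
  have hcont : Continuous fun y : E => h⁻¹ • (y - a) := by fun_prop
  refine ⟨fun y => annulusBump E j (h⁻¹ • (y - a)),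
    (hsmooth j).comp (by fun_prop), fun y hy => ?_, fun y hy => ?_, fun i hi y => ?_⟩
  · refine (hcont.tendsto y).eventually (annulusBump_eventuallyEq_one ?_)
    rwa [hnorm, inv_mul_le_iff₀ hh, mul_comm h]
  · refine (hcont.tendsto y).eventually (annulusBump_eventuallyEq_zero ?_)
    rwa [hnorm, le_inv_mul_iff₀ hh, mul_comm h]
  · exact (norm_iteratedFDeriv_comp_inv_smul_sub_le (hsmooth j) hi a y hh).trans <|
      (hB j i hi _).trans <|
        Finset.single_le_sum (f := B) (fun j _ => hB₀ j) (Finset.mem_range.2 hj)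

end Cutoff

lemma norm_iteratedFDeriv_mul_le_of_scaled {m : ℕ} {χ u : E → ℝ} (hχ : ContDiff ℝ m χ)
    (hu : ContDiff ℝ m u) {A B R h : ℝ} (hh : 0 < h) {y : E}
    (hχB : ∀ i ≤ m, ‖iteratedFDeriv ℝ i χ y‖ * h ^ i ≤ B)
    (huA : ∀ k i, k + i = m → ‖iteratedFDeriv ℝ k u y‖ ≤ A * (R * h) ^ i) :
    ‖iteratedFDeriv ℝ m (χ * u) y‖ ≤ A * B * (R + 1) ^ m := by
  refine (norm_iteratedFDeriv_mul_le (N := m) hχ hu y le_rfl).trans ?_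
  rw [add_pow, Finset.mul_sum]
  refine Finset.sum_le_sum fun i hi => ?_
  have him : i ≤ m := Nat.lt_succ_iff.1 (Finset.mem_range.1 hi)
  have hχi : ‖iteratedFDeriv ℝ i χ y‖ ≤ B / h ^ i :=
    (le_div_iff₀ (pow_pos hh i)).2 (hχB i him)
  have hB : 0 ≤ B / h ^ i := (norm_nonneg _).trans hχi
  have hui := huA (m - i) i (Nat.sub_add_cancel him)
  calc (m.choose i : ℝ) * ‖iteratedFDeriv ℝ i χ y‖ * ‖iteratedFDeriv ℝ (m - i) u y‖
      ≤ m.choose i * (B / h ^ i) * (A * (R * h) ^ i) := by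
        gcongr
    _ = A * B * (R ^ i * 1 ^ (m - i) * m.choose i) := by
        rw [mul_pow]
        field_simp
        ring

lemma norm_iteratedFDeriv_sub_le_of_closedBall {m : ℕ} {f g : E → F} (hf : ContDiff ℝ m f)
    (hg : ContDiff ℝ m g) {a : E} {A δ ρ : ℝ} (hA : 0 ≤ A) (hδ : 0 ≤ δ) (hρ : 0 ≤ ρ)
    (hfA : ∀ y, ‖iteratedFDeriv ℝ m f y‖ ≤ A) (hgA : ∀ y, ‖iteratedFDeriv ℝ m g y‖ ≤ A)
    (hfg : ∀ k < m, ‖iteratedFDeriv ℝ k (f - g) a‖ ≤ A * δ ^ (m - k)) {k i : ℕ} (hk : k + i = m) :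
    ∀ y ∈ Metric.closedBall a ρ, ‖iteratedFDeriv ℝ k (f - g) y‖ ≤ 3 * A * (δ + ρ) ^ i := by
  have htop (z : E) : ‖iteratedFDeriv ℝ m (f - g) z‖ ≤ 2 * A := by
    rw [iteratedFDeriv_sub_apply hf.contDiffAt hg.contDiffAt]
    linarith [norm_sub_le (iteratedFDeriv ℝ m f z) (iteratedFDeriv ℝ m g z), hfA z, hgA z]
  rw [show 3 * A = A + 2 * A by ring]
  exact norm_iteratedFDeriv_le_of_closedBall (hf.sub hg) hA (by positivity) hδ hρ
    (fun z _ => htop z) hfg hk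

lemma exists_glue_across_annulus (E : Type*) [NormedAddCommGroup E] [NormedSpace ℝ E]
    [FiniteDimensional ℝ E] (m N : ℕ) :
    ∃ K : ℝ, 0 ≤ K ∧ ∀ (f g : E → ℝ), ContDiff ℝ m f → ContDiff ℝ m g →
      ∀ (a : E) (h A : ℝ), 0 < h → 0 ≤ A → ∀ j < N,
        (∀ y, ‖iteratedFDeriv ℝ m f y‖ ≤ A) → (∀ y, ‖iteratedFDeriv ℝ m g y‖ ≤ A) →
        (∀ k < m, ‖iteratedFDeriv ℝ k (f - g) a‖ ≤ A * h ^ (m - k)) →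
        ∃ F : E → ℝ, ContDiff ℝ m F ∧ (∀ y, dist a y ≤ j * h → F =ᶠ[nhds y] f) ∧
          (∀ y, (j + 1) * h ≤ dist a y → F =ᶠ[nhds y] g) ∧
          ∀ y, ‖iteratedFDeriv ℝ m F y‖ ≤ K * A := by
  obtain ⟨B, hB, hcutoff⟩ := exists_annulus_cutoff E m N
  refine ⟨1 + 3 * B * (N + 1 + 1) ^ m, by positivity,
    fun f g hf hg a h A hh hA j hj hfA hgA hfg => ?_⟩
  obtain ⟨χ, hχ, hχ_one, hχ_zero, hχB⟩ := hcutoff a h hh j hj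
  have hFg (y : E) (hy : (j + 1) * h ≤ dist a y) : g + χ * (f - g) =ᶠ[nhds y] g := by
    filter_upwards [hχ_zero y hy] with z hz
    simp only [Pi.add_apply, Pi.mul_apply, hz, Pi.zero_apply, zero_mul, add_zero]
  refine ⟨g + χ * (f - g), hg.add (hχ.mul (hf.sub hg)), fun y hy => ?_, hFg, fun y => ?_⟩
  · filter_upwards [hχ_one y hy] with z hz
    simp only [Pi.add_apply, Pi.mul_apply, Pi.sub_apply, hz, Pi.one_apply, one_mul,
      add_sub_cancel]
  rcases le_or_gt ((j + 1) * h) (dist a y) with hfar | hnear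
  · rw [((hFg y hfar).iteratedFDeriv ℝ m).eq_of_nhds]
    refine (hgA y).trans (le_mul_of_one_le_left hA ?_)
    linarith [show 0 ≤ 3 * B * (N + 1 + 1 : ℝ) ^ m by positivity]
  have hjN : (j : ℝ) + 1 ≤ N := by exact_mod_cast hj
  have hu (k i : ℕ) (hk : k + i = m) :
      ‖iteratedFDeriv ℝ k (f - g) y‖ ≤ 3 * A * ((N + 1) * h) ^ i := by
    refine (norm_iteratedFDeriv_sub_le_of_closedBall hf hg hA hh.le
      (by positivity : 0 ≤ (j + 1) * h) hfA hgA hfg hk y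
      (Metric.mem_closedBall'.2 hnear.le)).trans ?_
    rw [show h + (j + 1) * h = (j + 1 + 1) * h by ring]
    gcongr
  have hadd : iteratedFDeriv ℝ m (g + χ * (f - g)) y =
      iteratedFDeriv ℝ m g y + iteratedFDeriv ℝ m (χ * (f - g)) y :=
    iteratedFDeriv_add_apply hg.contDiffAt (hχ.mul (hf.sub hg)).contDiffAt
  rw [hadd]
  calc _ ≤ ‖iteratedFDeriv ℝ m g y‖ + ‖iteratedFDeriv ℝ m (χ * (f - g)) y‖ := norm_add_le _ _
    _ ≤ A + 3 * A * B * (N + 1 + 1) ^ m := add_le_add (hgA y) <|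
        norm_iteratedFDeriv_mul_le_of_scaled hχ (hf.sub hg) hh (fun i hi => hχB i hi y) hu
    _ = (1 + 3 * B * (N + 1 + 1) ^ m) * A := by ring

end Gluing

section ClusterGluing

variable {n r D : ℕ} {ι : Type*}

/-- `F` is a `C^{r+1}` function with `‖D^{r+1} F‖ ≤ K` which coincides with the polynomial `p x`
near `pt x`, for every `x ∈ s`. Prescribing whole germs makes extensions easy to glue. -/
structure IsGermExtension (r : ℕ) (pt : ι → En n) (p : ι → MvPolynomial (Fin n) ℝ) (s : Finset ι)
    (K : ℝ) (F : En n → ℝ) : Prop where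
  contDiff : ContDiff ℝ (r + 1 : ℕ) F
  eventuallyEq : ∀ x ∈ s, F =ᶠ[nhds (pt x)] polyFun (p x)
  norm_le : ∀ y, ‖iteratedFDeriv ℝ (r + 1) F y‖ ≤ K

lemma isGermExtension_polyFun {pt : ι → En n} {p : ι → MvPolynomial (Fin n) ℝ} {x : ι}
    (hp : (p x).totalDegree ≤ r) : IsGermExtension r pt p {x} 0 (polyFun (p x)) where
  contDiff := polyFun_contDiff _
  eventuallyEq y hy := Finset.mem_singleton.1 hy ▸ Filter.EventuallyEq.rfl
  norm_le y := by rw [iteratedFDeriv_polyFun_eq_zero (Nat.lt_succ_of_le hp), norm_zero]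

lemma IsGermExtension.iteratedFDeriv_sub_polyFun_eq_zero {pt : ι → En n}
    {p : ι → MvPolynomial (Fin n) ℝ} {s : Finset ι} {K : ℝ} {F : En n → ℝ}
    (hF : IsGermExtension r pt p s K F) {x : ι} (hx : x ∈ s) (k : ℕ) :
    iteratedFDeriv ℝ k (F - polyFun (p x)) (pt x) = 0 := by
  have hzero : F - polyFun (p x) =ᶠ[nhds (pt x)] fun _ => 0 := by
    filter_upwards [hF.eventuallyEq x hx] with y hy
    rw [Pi.sub_apply, hy, sub_self]
  rw [(hzero.iteratedFDeriv ℝ k).eq_of_nhds, iteratedFDeriv_fun_zero, Pi.zero_apply]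

lemma IsGermExtension.norm_iteratedFDeriv_sub_le {pt : ι → En n} {P : ι → Fin D → JetSpace n r}
    {j : Fin D} {s t : Finset ι} {K L : ℝ} {f g : En n → ℝ}
    (hf : IsGermExtension r pt (fun x => P x j) s K f)
    (hg : IsGermExtension r pt (fun x => P x j) t L g) (hL : 0 ≤ L) {a b : ι} (ha : a ∈ s)
    (hb : b ∈ t) (hab : 0 < dist (pt a) (pt b)) {k : ℕ} (hk : k ≤ r) :
    ‖iteratedFDeriv ℝ k (f - g) (pt a)‖ ≤
      ((n + 1) ^ r * ‖scaledCoords (pt a) (dist (pt a) (pt b)) (P a - P b)‖ + L) *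
        dist (pt a) (pt b) ^ (r + 1 - k) := by
  let p : MvPolynomial (Fin n) ℝ := ((P a - P b) j : JetSpace n r)
  let q : MvPolynomial (Fin n) ℝ := P b j
  have hfg : f - g =ᶠ[nhds (pt a)] polyFun p - (g - polyFun q) := by
    filter_upwards [hf.eventuallyEq a ha] with y hy
    have hpq : polyFun p y = polyFun (P a j) y - polyFun q y :=
      congrFun (polyFun_sub (P a j : MvPolynomial (Fin n) ℝ) (P b j)) y
    simp only [Pi.sub_apply, hy, hpq, sub_sub_sub_cancel_right]
  have hk' : (k : WithTop ℕ∞) ≤ (r + 1 : ℕ) := by exact_mod_cast Nat.le_succ_of_le hk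
  have hsub : ContDiff ℝ k (g - polyFun q) := (hg.contDiff.of_le hk').sub (polyFun_contDiff _)
  have hpoly : ContDiff ℝ k (polyFun p) := polyFun_contDiff _
  rw [(hfg.iteratedFDeriv ℝ k).eq_of_nhds, iteratedFDeriv_sub_apply hpoly.contDiffAt
    hsub.contDiffAt, add_mul]
  exact (norm_sub_le _ _).trans (add_le_add
    (norm_iteratedFDeriv_polyFun_le hab (P a - P b) j hk)
    (norm_iteratedFDeriv_sub_polyFun_le hg.contDiff hL hg.norm_le
      (JetSpace.totalDegree_le (P b j))
      (fun i _ => hg.iteratedFDeriv_sub_polyFun_eq_zero hb i) hk _))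

lemma exists_isGermExtension_of_wellSeparated (n r D N : ℕ) (ι : Type*) {C Kₗ Kᵣ : ℝ}
    (hC : 0 ≤ C) (hKₗ : 0 ≤ Kₗ) (hKᵣ : 0 ≤ Kᵣ) :
    ∃ K : ℝ, 0 ≤ K ∧ ∀ (ν : ClusterTree ι × ClusterTree ι) (pt : ι → En n)
      (P : ι → Fin D → JetSpace n r) (j : Fin D) (f g : En n → ℝ),
      WellSeparated N pt ν →
      ‖scaledCoords (pt ν.1.base) (dist (pt ν.1.base) (pt ν.2.base))
        (P ν.1.base - P ν.2.base)‖ ≤ C →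
      IsGermExtension r pt (fun x => P x j) ν.1.leaves Kₗ f →
      IsGermExtension r pt (fun x => P x j) ν.2.leaves Kᵣ g →
      ∃ F, IsGermExtension r pt (fun x => P x j) (ν.1.leaves ∪ ν.2.leaves) K F := by
  obtain ⟨K, hK, hglue⟩ := exists_glue_across_annulus (En n) (r + 1) N
  let A₀ : ℝ := (n + 1) ^ r * C + Kₗ + Kᵣ
  let A : ℝ := A₀ * (N + 1) ^ (r + 1)
  have hCn : 0 ≤ (n + 1 : ℝ) ^ r * C := by positivity
  have hA₀A : A₀ ≤ A := le_mul_of_one_le_right (by positivity) (one_le_pow₀ (by simp))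
  have hKₗA : Kₗ ≤ A := (by linarith : Kₗ ≤ A₀).trans hA₀A
  have hKᵣA : Kᵣ ≤ A := (by linarith : Kᵣ ≤ A₀).trans hA₀A
  have hA : 0 ≤ A := hKₗ.trans hKₗA
  refine ⟨K * A, by positivity, fun ν pt P j f g hν hP hf hg => ?_⟩
  have hdist := hν.dist_base_pos
  obtain ⟨h, hh, i, hi, hnear, hfar⟩ := hν
  have hle : dist (pt ν.1.base) (pt ν.2.base) ≤ (N + 1) * h :=
    (hfar _ ν.2.base_mem_leaves).2.trans (by gcongr; linarith)
  have hfg (k : ℕ) (hk : k < r + 1) :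
      ‖iteratedFDeriv ℝ k (f - g) (pt ν.1.base)‖ ≤ A * h ^ (r + 1 - k) := by
    calc _ ≤ ((n + 1) ^ r * C + Kᵣ) * ((N + 1) * h) ^ (r + 1 - k) := by
          refine (hf.norm_iteratedFDeriv_sub_le hg hKᵣ ν.1.base_mem_leaves
            ν.2.base_mem_leaves hdist (Nat.le_of_lt_succ hk)).trans ?_
          gcongr
      _ ≤ A₀ * (N + 1) ^ (r + 1) * h ^ (r + 1 - k) := by
          rw [mul_pow, ← mul_assoc]
          gcongr ?_ * ?_ * _
          · linarith
          · exact pow_le_pow_right₀ (by simp) (Nat.sub_le _ _)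
  obtain ⟨F, hF, hFf, hFg, hFK⟩ := hglue f g hf.contDiff hg.contDiff (pt ν.1.base) h A hh hA i hi
    (fun y => (hf.norm_le y).trans hKₗA) (fun y => (hg.norm_le y).trans hKᵣA) hfg
  refine ⟨F, hF, fun x hx => ?_, hFK⟩
  rcases Finset.mem_union.1 hx with hx | hx
  · exact (hFf _ (hnear x hx)).trans (hf.eventuallyEq x hx)
  · exact (hFg _ (hfar x hx).1).trans (hg.eventuallyEq x hx)

lemma exists_isGermExtension_leaves (n r D N : ℕ) {C : ℝ} (hC : 0 ≤ C) (τ : ClusterTree ι) :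
    ∃ K : ℝ, 0 ≤ K ∧ ∀ (pt : ι → En n) (P : ι → Fin D → JetSpace n r),
      (∀ ν ∈ τ.splits, WellSeparated N pt ν) →
      (∀ ν ∈ τ.splits, ‖scaledCoords (pt ν.1.base) (dist (pt ν.1.base) (pt ν.2.base))
        (P ν.1.base - P ν.2.base)‖ ≤ C) →
      ∀ j, ∃ F, IsGermExtension r pt (fun x => P x j) τ.leaves K F := by
  induction τ with
  | leaf i =>
    exact ⟨0, le_rfl, fun pt P _ _ j =>
      ⟨_, isGermExtension_polyFun (JetSpace.totalDegree_le (P i j))⟩⟩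
  | node τₗ τᵣ ihₗ ihᵣ =>
    obtain ⟨Kₗ, hKₗ, hleft⟩ := ihₗ
    obtain ⟨Kᵣ, hKᵣ, hright⟩ := ihᵣ
    obtain ⟨K, hK, hnode⟩ := exists_isGermExtension_of_wellSeparated n r D N ι hC hKₗ hKᵣ
    refine ⟨K, hK, fun pt P hsep hP j => ?_⟩
    obtain ⟨hsep, hsepₗ, hsepᵣ⟩ := ClusterTree.forall_mem_splits_node.1 hsep
    obtain ⟨hP, hPₗ, hPᵣ⟩ := ClusterTree.forall_mem_splits_node.1 hP
    obtain ⟨f, hf⟩ := hleft pt P hsepₗ hPₗ j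
    obtain ⟨g, hg⟩ := hright pt P hsepᵣ hPᵣ j
    exact hnode (τₗ, τᵣ) pt P j f g hsep hP hf hg

end ClusterGluing

section Selection

variable {n r D N : ℕ} {ι : Type*}

/-- The length scale of the node `ν`, namely the distance of its two base points, with the value `1`
if these coincide. -/
def mergeScale (pt : ι → En n) (ν : ClusterTree ι × ClusterTree ι) : ℝ :=
  if pt ν.1.base = pt ν.2.base then 1 else dist (pt ν.1.base) (pt ν.2.base)

lemma mergeScale_pos (pt : ι → En n) (ν : ClusterTree ι × ClusterTree ι) : 0 < mergeScale pt ν := by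
  unfold mergeScale
  split_ifs with h
  exacts [one_pos, dist_pos.2 h]

lemma WellSeparated.mergeScale_eq {pt : ι → En n} {ν : ClusterTree ι × ClusterTree ι}
    (hν : WellSeparated N pt ν) : mergeScale pt ν = dist (pt ν.1.base) (pt ν.2.base) :=
  if_neg (dist_pos.1 hν.dist_base_pos)

/-- The coordinates on `𝒫^D` adapted to the node `ν`. -/
def mergeCoords (pt : ι → En n) (ν : ClusterTree ι × ClusterTree ι) :
    (Fin D → JetSpace n r) ≃ₗ[ℝ] (JetIndex n r × Fin D → ℝ) :=
  LinearEquiv.ofBijective _ (scaledCoords_bijective (pt ν.1.base) (mergeScale_pos pt ν).ne')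

lemma WellSeparated.mergeCoords_apply {pt : ι → En n} {ν : ClusterTree ι × ClusterTree ι}
    (hν : WellSeparated N pt ν) (P : Fin D → JetSpace n r) :
    mergeCoords pt ν P = scaledCoords (pt ν.1.base) (dist (pt ν.1.base) (pt ν.2.base)) P := by
  rw [← hν.mergeScale_eq]
  rfl

lemma WellSeparated.norm_mergeCoords_le {pt : ι → En n} {ν κ : ClusterTree ι × ClusterTree ι}
    (hν : WellSeparated N pt ν) (hκ : WellSeparated N pt κ) (hκν : κ ∈ ClusterTree.subsplits ν)
    (P : Fin D → JetSpace n r) :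
    ‖mergeCoords pt ν P‖ ≤
      (n + 1) ^ r * (2 * (2 * N) + 1) ^ (r + 1) * ‖mergeCoords pt κ P‖ := by
  rw [hν.mergeCoords_apply, hκ.mergeCoords_apply]
  have hbase := hν.dist_base_le (ClusterTree.leaves_subset_of_mem_subsplits hκν
    (Finset.mem_union_left _ κ.1.base_mem_leaves))
  refine norm_scaledCoords_le_mul hν.dist_base_pos hκ.dist_base_pos (hbase.trans ?_)
    (hν.dist_base_le_of_mem_subsplits hκν) P
  gcongr
  linarith [N.cast_nonneg (α := ℝ)]

/-- Some `F` with `‖F‖_{Ċ^{r+1}} ≤ c` satisfies `J_{pt x} F ∈ G x` for every `x ∈ B`. -/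
def JetSelectable (r : ℕ) (pt : ι → En n) (G : ι → Set (Fin D → MvPolynomial (Fin n) ℝ))
    (B : Finset ι) (c : ℝ) : Prop :=
  ∃ F : En n → Fin D → ℝ, ContDiff ℝ (r + 1 : ℕ) F ∧ CmHomogLE (r + 1) F c ∧
    ∀ x ∈ B, jetD (r + 1) F (pt x) ∈ G x

lemma JetSelectable.mono {pt : ι → En n} {G : ι → Set (Fin D → MvPolynomial (Fin n) ℝ)}
    {B : Finset ι} {c c' : ℝ} (h : JetSelectable r pt G B c) (hc : c ≤ c') :
    JetSelectable r pt G B c' := by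
  obtain ⟨F, hF, hFc, hFG⟩ := h
  exact ⟨F, hF, fun α hα x j => (hFc α hα x j).trans hc, hFG⟩

lemma JetSelectable.exists_compatible {pt : ι → En n}
    {G : ι → Set (Fin D → MvPolynomial (Fin n) ℝ)} {B : Finset ι} {c : ℝ}
    (h : JetSelectable r pt G B c) (hc : 0 ≤ c) {τ : ClusterTree ι}
    (hτ : ∀ ν ∈ τ.splits, WellSeparated N pt ν) :
    ∃ P : ι → Fin D → JetSpace n r, (∀ x ∈ B, (fun j => (P x j : MvPolynomial (Fin n) ℝ)) ∈ G x) ∧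
      Compatible (n ^ (r + 1) * c) (mergeCoords pt) τ P := by
  obtain ⟨F, hF, hFc, hFG⟩ := h
  refine ⟨fun x => jetAt r F (pt x), hFG, fun ν hν => ?_⟩
  rw [(hτ ν hν).mergeCoords_apply]
  exact norm_scaledCoords_jetAt_sub_le hF hc hFc (hτ ν hν).dist_base_pos

lemma exists_jetSelectable_of_compatible (n r D N : ℕ) (C : ℝ) (τ : ClusterTree ι) :
    ∃ K : ℝ, ∀ (pt : ι → En n) (P : ι → Fin D → JetSpace n r)
      (G : ι → Set (Fin D → MvPolynomial (Fin n) ℝ)),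
      (∀ ν ∈ τ.splits, WellSeparated N pt ν) → Compatible C (mergeCoords pt) τ P →
      (∀ x ∈ τ.leaves, (fun j => (P x j : MvPolynomial (Fin n) ℝ)) ∈ G x) →
      JetSelectable r pt G τ.leaves K := by
  obtain ⟨K, -, hK⟩ := exists_isGermExtension_leaves n r D N (abs_nonneg C) τ
  refine ⟨K, fun pt P G hτ hP hPG => ?_⟩
  choose F hF using hK pt P hτ fun ν hν =>
    (hτ ν hν).mergeCoords_apply (P ν.1.base - P ν.2.base) ▸ (hP ν hν).trans (le_abs_self C)
  refine ⟨fun y j => F j y, contDiff_pi.2 fun j => (hF j).contDiff, fun α hα y j => ?_,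
    fun x hx => ?_⟩
  · exact (abs_pdalpha_le_norm_iteratedFDeriv hα (hF j).contDiff y).trans ((hF j).norm_le y)
  · convert hPG x hx using 1
    exact funext fun j => jetScalar_eq_of_eventuallyEq (JetSpace.totalDegree_le (P x j))
      ((hF j).eventuallyEq x hx)

lemma exists_jetSelectable_of_clustering (n r D N : ℕ) [Fintype ι] {τ : ClusterTree ι}
    (hτ : τ.Nodup) (hleaves : τ.leaves = Finset.univ) :
    ∃ K : ℝ, ∀ pt : ι → En n, (∀ ν ∈ τ.splits, WellSeparated N pt ν) →
      ∀ G : ι → Set (Fin D → MvPolynomial (Fin n) ℝ), (∀ x, Convex ℝ (G x)) →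
      (∀ B : Finset ι, B.card ≤ 2 ^ (D * (n + r).choose n) → JetSelectable r pt G B 1) →
      JetSelectable r pt G Finset.univ K := by
  have hcard : Fintype.card (JetIndex n r × Fin D) ≤ D * (n + r).choose n := by
    rw [Fintype.card_prod, Fintype.card_fin, mul_comm]
    exact Nat.mul_le_mul_left D JetIndex.card_le_choose
  obtain ⟨C, hC⟩ := exists_compatible_selection (JetIndex n r × Fin D) (Fin D → JetSpace n r) hτ
    hleaves (L := (n + 1) ^ r * (2 * (2 * N) + 1) ^ (r + 1)) (c₀ := n ^ (r + 1) * 1) (by positivity)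
  obtain ⟨K, hK⟩ := exists_jetSelectable_of_compatible n r D N C τ
  refine ⟨K, fun pt hsep G hG hsel => ?_⟩
  obtain ⟨P, hPG, hP⟩ := hC (mergeCoords pt)
    (fun ν hν κ hκ P => (hsep ν hν).norm_mergeCoords_le
      (hsep κ (ClusterTree.mem_splits_of_mem_subsplits hν hκ)) hκ P)
    (fun x => (JetSpace n r).subtype.compLeft (Fin D) ⁻¹' G x) (fun x => (hG x).linear_preimage _)
    (fun B hB => (hsel B (hB.trans (Nat.pow_le_pow_right two_pos hcard))).exists_compatible
      zero_le_one hsep)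
  exact hleaves ▸ hK pt P G hsep hP fun x _ => hPG x

lemma exists_jetSelectable_of_injective (n r D : ℕ) (ι : Type*) [Fintype ι] :
    ∃ K : ℝ, ∀ pt : ι → En n, Function.Injective pt →
      ∀ G : ι → Set (Fin D → MvPolynomial (Fin n) ℝ), (∀ x, Convex ℝ (G x)) →
      (∀ B : Finset ι, B.card ≤ 2 ^ (D * (n + r).choose n) → JetSelectable r pt G B 1) →
      JetSelectable r pt G Finset.univ K := by
  choose! K hK using fun (τ : ClusterTree ι) (hτ : τ.Nodup ∧ τ.leaves = Finset.univ) =>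
    exists_jetSelectable_of_clustering n r D (Fintype.card ι) hτ.1 hτ.2
  obtain ⟨M, hM⟩ := ((ClusterTree.finite_setOf_nodup ι).image K).bddAbove
  refine ⟨max 1 M, fun pt hpt G hG hsel => ?_⟩
  rcases isEmpty_or_nonempty ι with hι | ⟨⟨a⟩⟩
  · exact (hsel Finset.univ (by simp)).mono (le_max_left 1 M)
  obtain ⟨τ, -, hleaves, hsep⟩ :=
    exists_wellSeparated_clustering hpt (S := Finset.univ) le_rfl (Finset.mem_univ a)
  have hτ : τ.Nodup := fun ν hν => (hsep ν hν).disjoint_leaves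
  exact (hK τ ⟨hτ, hleaves⟩ pt hsep G hG hsel).mono
    ((hM (Set.mem_image_of_mem K hτ)).trans (le_max_right 1 M))

end Selection

end WeakFiniteness

theorem weak_finiteness_principle_Cm_homogeneous_general (m n D : ℕ) (hm : 1 ≤ m) (N : ℕ) :
    ∃ γ : ℝ, 0 < γ ∧
      ∀ S : Finset (En n), S.card ≤ N →
        ∀ G : En n → Set (Fin D → MvPolynomial (Fin n) ℝ),
          (∀ x ∈ S, Convex ℝ (G x)) →
          (∀ S' : Finset (En n), S' ⊆ S → S'.card ≤ 2 ^ (D * Nat.choose (n + m - 1) n) →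
            ∃ F : En n → Fin D → ℝ, ContDiff ℝ m F ∧ CmHomogLE m F 1 ∧
              ∀ x ∈ S', jetD m F x ∈ G x) →
          ∃ F : En n → Fin D → ℝ, ContDiff ℝ m F ∧ CmHomogLE m F γ ∧
            ∀ x ∈ S, jetD m F x ∈ G x := by
  obtain ⟨r, rfl⟩ := Nat.exists_eq_add_of_le' hm
  choose K hK using fun k => WeakFiniteness.exists_jetSelectable_of_injective n r D (Fin k)
  obtain ⟨M, hM⟩ := ((Set.finite_Iic N).image K).bddAbove
  refine ⟨max 1 M, by positivity, fun S hS G hG hsel => ?_⟩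
  let pt : Fin S.card → En n := fun i => S.equivFin.symm i
  have hpt : Function.Injective pt := Subtype.val_injective.comp S.equivFin.symm.injective
  have hselect (B : Finset (Fin S.card)) (hB : B.card ≤ 2 ^ (D * (n + r).choose n)) :
      WeakFiniteness.JetSelectable r pt (fun i => G (pt i)) B 1 := by
    obtain ⟨F, hF, hF1, hFG⟩ := hsel (B.image pt)
      (Finset.image_subset_iff.2 fun i _ => (S.equivFin.symm i).2)
      (Finset.card_image_le.trans hB)
    exact ⟨F, hF, hF1, fun i hi => hFG _ (Finset.mem_image_of_mem pt hi)⟩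
  obtain ⟨F, hF, hFM, hFG⟩ := (hK S.card pt hpt (fun i => G (pt i))
    (fun i => hG _ (S.equivFin.symm i).2) hselect).mono
      ((hM (Set.mem_image_of_mem K hS)).trans (le_max_right 1 M))
  refine ⟨F, hF, hFM, fun x hx => ?_⟩
  simpa only [pt, Equiv.symm_apply_apply] using hFG (S.equivFin ⟨x, hx⟩) (Finset.mem_univ _)

/-- **Weak finiteness principle for `Ċ^m` jet selection** (Theorem 1.4, homogeneous flavor):
the finiteness constant is `2^(dim 𝒫⃗) = 2^(D·binom(n+m-1,n))`, and `γ` depends only on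
`m, n, D` and a bound `N` on `|S|`. -/
theorem weak_finiteness_principle_Cm_homogeneous
    (m n D : ℕ) (hm : 1 ≤ m) (hn : 1 ≤ n) (hD : 1 ≤ D) (N : ℕ) (hN : 0 < N) :
    ∃ γ : ℝ, 0 < γ ∧
      ∀ S : Finset (En n), S.card ≤ N → (∀ x ∈ S, ∀ y ∈ S, dist x y ≤ 1) →
        ∀ G : En n → Set (Fin D → MvPolynomial (Fin n) ℝ),
          (∀ x ∈ S, Convex ℝ (G x)) →
          (∀ x ∈ S, ∀ P ∈ G x, ∀ j, (P j).totalDegree ≤ m - 1) →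
          (∀ S' : Finset (En n), S' ⊆ S → S'.card ≤ 2 ^ (D * Nat.choose (n + m - 1) n) →
            ∃ F : En n → Fin D → ℝ, ContDiff ℝ m F ∧ CmHomogLE m F 1 ∧
              ∀ x ∈ S', jetD m F x ∈ G x) →
          ∃ F : En n → Fin D → ℝ, ContDiff ℝ m F ∧ CmHomogLE m F γ ∧
            ∀ x ∈ S, jetD m F x ∈ G x := by
  obtain ⟨γ, hγ, h⟩ := weak_finiteness_principle_Cm_homogeneous_general m n D hm N
  exact ⟨γ, hγ, fun S hS _ G hG _ hsel => h S hS G hG hsel⟩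

end
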